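/- arXiv:1604.04045 — 3 statements merged into one kernel-verified Lean document; each statement's English description precedes it below -/
import Mathlib

section
/- Let T be a tree, r a vertex, and let P₁,…,P_k be a maximum r-path partition of T with path lengths a₁ ≥ a₂ ≥ ⋯ ≥ a_k. Then the t-pebbling number satisfies π_t(T,r) = t·2^{a₁} + Σ_{i=2}^{k} 2^{a_i} − k + 1. -/
open SimpleGraph

/-- A single pebbling step: remove two pebbles from `u`, add one to a neighbor `v`. -/
def PebStep {V : Type} (G : SimpleGraph V) (C C' : V → ℕ) : Prop :=
  ∃ u v : V, G.Adj u v ∧ 2 ≤ C u ∧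
    C' u + 2 = C u ∧ C' v = C v + 1 ∧ ∀ w, w ≠ u → w ≠ v → C' w = C w

/-- `C` is `t`-fold `r`-solvable. -/
def TSolvable {V : Type} (G : SimpleGraph V) (C : V → ℕ) (r : V) (t : ℕ) : Prop :=
  ∃ C', Relation.ReflTransGen (PebStep G) C C' ∧ t ≤ C' r

/-- The `t`-pebbling number of `G` rooted at `r`. -/
noncomputable def piT {V : Type} (G : SimpleGraph V) (r : V) (t : ℕ) : ℕ :=
  sInf {s | ∀ C : V → ℕ, s ≤ ∑ᶠ v, C v → TSolvable G C r t}

/-- The pebbling number of `G` rooted at `r`. -/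
noncomputable def pin {V : Type} (G : SimpleGraph V) (r : V) : ℕ := piT G r 1

/-- The `t`-pebbling number of `G`. -/
noncomputable def piGt {V : Type} (G : SimpleGraph V) (t : ℕ) : ℕ := ⨆ r, piT G r t

/-- The pebbling number of `G`. -/
noncomputable def piG {V : Type} (G : SimpleGraph V) : ℕ := ⨆ r, pin G r

/-- Eccentricity of `r`. -/
noncomputable def eccG {V : Type} (G : SimpleGraph V) (r : V) : ℕ := ⨆ v, G.dist r v

/-- Diameter of `G`. -/
noncomputable def diamG {V : Type} (G : SimpleGraph V) : ℕ := ⨆ u, eccG G u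

/-- `MaxPP G F W L` : starting from the remaining edge set `F` and visited vertex set `W`,
the list `L` records the lengths of paths chosen by the maximum path-partition process:
repeatedly take a longest path whose edges remain in `F` and which starts in `W`,
record its length, remove its edges and add its vertices, until no edges remain. -/
inductive MaxPP {V : Type} (G : SimpleGraph V) : Set (Sym2 V) → Set V → List ℕ → Prop
  | nil (W : Set V) : MaxPP G ∅ W []
  | cons (F : Set (Sym2 V)) (W : Set V) {u v : V} (p : G.Walk u v)
      (hu : u ∈ W) (hp : p.IsPath) (hF : ∀ e ∈ p.edges, e ∈ F)
      (hmax : ∀ {a b : V} (q : G.Walk a b), a ∈ W → q.IsPath →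
        (∀ e ∈ q.edges, e ∈ F) → q.length ≤ p.length)
      (L : List ℕ)
      (h : MaxPP G (F \ {e | e ∈ p.edges}) (W ∪ {x | x ∈ p.support}) L) :
      MaxPP G F W (p.length :: L)

/-!
Root `T` at `r`, let `height v` be the largest distance from `v` to a vertex below it, and let the
branches of `T` be the successive paths of the partition without their starting points.

*Upper bound.* A pebble at `v` weighs `2 ^ height v`. Moving two pebbles towards the root never
decreases the total weight, so we may move greedily until every vertex other than `r` holds at most
one pebble. Since each branch is a longest one, the vertices of a branch of length `a` have heights
at most `0, 1, …, a - 1`, so their pebbles weigh at most `2 ^ a - 1` altogether. Any weight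
beyond the sum of these bounds lies on `r`, where a pebble weighs `2 ^ a₁`.

*Lower bound.* Put `t * 2 ^ a₁ - 1` pebbles on the tip of the first branch and `2 ^ a - 1` on the
tip of each further branch of length `a`. A certificate `m` with `C x + ∑ ⌊m c / 2⌋ ≤ m x` for every
`x`, where `c` runs over the children of `x`, can be updated along every pebbling step, including
one away from the root, without changing `m r`. Here there is one with `m r = t - 1`.
-/

/-! ### Parent maps of rooted trees -/

/-- `par` sends each vertex of the tree `G` to the next vertex on its path to the root `r`, and
fixes `r`. The depth of `v` is `G.dist r v`. -/
structure IsParentMap {V : Type*} (G : SimpleGraph V) (r : V) (par : V → V) : Prop where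
  map_root : par r = r
  dist_eq : ∀ v, v ≠ r → G.dist r v = G.dist r (par v) + 1
  adj_iff : ∀ u v, G.Adj u v ↔ (u ≠ r ∧ par u = v) ∨ (v ≠ r ∧ par v = u)

theorem exists_isParentMap {V : Type*} {G : SimpleGraph V} (hG : G.IsTree) (r : V) :
    ∃ par, IsParentMap G r par := by
  choose p hp using fun v => hG.connected.exists_walk_length_eq_dist v r
  have not_nil {v : V} (hv : v ≠ r) : ¬ (p v).Nil := Walk.not_nil_of_ne hv
  have dist_eq (v : V) (hv : v ≠ r) : G.dist r v = G.dist r (p v).snd + 1 := by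
    have hle := G.dist_le (p v).tail
    have hlen := Walk.length_tail_add_one (not_nil hv)
    have hadj := hG.dist_eq_dist_add_one_of_adj r (Walk.adj_snd (not_nil hv))
    rw [hp, dist_comm] at hlen
    rw [dist_comm] at hle
    omega
  have snd_eq {u v : V} (huv : G.Adj u v) (hd : G.dist r u = G.dist r v + 1) : (p u).snd = v := by
    have hpath : (Walk.cons huv (p v)).IsPath := Walk.isPath_of_length_eq_dist _ <| by
      rw [Walk.length_cons, hp, dist_comm, ← hd, dist_comm]
    have huniq := (hG.isAcyclic.subsingleton_path u r).elim
      ⟨p u, Walk.isPath_of_length_eq_dist _ (hp u)⟩ ⟨_, hpath⟩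
    rw [Subtype.mk.inj huniq, Walk.snd_cons]
  refine ⟨fun v => (p v).snd, ?_, dist_eq, fun u v => ⟨fun huv => ?_, ?_⟩⟩
  · have hnil : (p r).Nil := Walk.length_eq_zero_iff.1 (by rw [hp, dist_self])
    rw [Walk.eq_nil_iff_nil.2 hnil, Walk.snd, Walk.getVert_nil]
  · rcases hG.dist_eq_dist_add_one_of_adj r huv with hd | hd
    · exact Or.inl ⟨by rintro rfl; simp at hd, snd_eq huv hd⟩
    · exact Or.inr ⟨by rintro rfl; simp at hd, snd_eq huv.symm hd⟩
  · rintro (⟨hu, rfl⟩ | ⟨hv, rfl⟩)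
    · exact Walk.adj_snd (not_nil hu)
    · exact (Walk.adj_snd (not_nil hv)).symm

namespace IsParentMap

variable {V : Type*} {G : SimpleGraph V} {r v : V} {par : V → V}

theorem adj_par (h : IsParentMap G r par) (hv : v ≠ r) : G.Adj v (par v) :=
  (h.adj_iff v (par v)).2 (Or.inl ⟨hv, rfl⟩)

theorem dist_eq_zero (h : IsParentMap G r par) : G.dist r v = 0 ↔ v = r := by
  refine ⟨fun hv => ?_, fun hv => hv ▸ dist_self⟩
  by_contra hne
  have := h.dist_eq v hne
  omega

theorem dist_iterate (h : IsParentMap G r par) (n : ℕ) (v : V) :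
    G.dist r (par^[n] v) = G.dist r v - n := by
  induction n with
  | zero => rfl
  | succ n ih =>
    rw [Function.iterate_succ_apply']
    by_cases hv : par^[n] v = r
    · rw [hv, dist_self] at ih
      rw [hv, h.map_root, dist_self]
      omega
    · have := h.dist_eq _ hv
      omega

theorem iterate_dist (h : IsParentMap G r par) (v : V) : par^[G.dist r v] v = r := by
  rw [← h.dist_eq_zero, h.dist_iterate, Nat.sub_self]

end IsParentMap

/-! ### Branches -/

section Branch

variable {V : Type*} {G : SimpleGraph V} {r v y : V} {par : V → V} {W : Set V} {a i n : ℕ}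

/-- The first `a` vertices `v, par v, …, par^[a - 1] v` of the path from `v` to the root. -/
def branch (par : V → V) (v : V) (a : ℕ) : Set V :=
  (fun i => par^[i] v) '' Set.Iio a

/-- The path from `v` to the root first meets `W` after exactly `a` steps: the branch of length
`a` at `v` hangs off `W`. -/
def IsBranch (par : V → V) (W : Set V) (v : V) (a : ℕ) : Prop :=
  par^[a] v ∈ W ∧ ∀ i < a, par^[i] v ∉ W

theorem iterate_mem_branch (v : V) (hi : i < a) : par^[i] v ∈ branch par v a :=
  Set.mem_image_of_mem _ hi

theorem branch_succ : branch par v (a + 1) = insert v (branch par (par v) a) := by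
  ext x
  constructor
  · rintro ⟨_ | i, hi, rfl⟩
    · exact Set.mem_insert v _
    · exact Or.inr ⟨i, Nat.lt_of_succ_lt_succ hi, rfl⟩
  · rintro (rfl | ⟨i, hi, rfl⟩)
    · exact ⟨0, Nat.succ_pos a, rfl⟩
    · exact ⟨i + 1, Nat.succ_lt_succ hi, rfl⟩

namespace IsBranch

theorem notMem (h : IsBranch par W v a) {x : V} (hx : x ∈ branch par v a) : x ∉ W := by
  obtain ⟨i, hi, rfl⟩ := hx
  exact h.2 i hi

theorem of_succ (h : IsBranch par W v (a + 1)) : IsBranch par W (par v) a :=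
  ⟨h.1, fun i hi => h.2 (i + 1) (Nat.succ_lt_succ hi)⟩

theorem mapsTo_union (h : IsBranch par W v a) (hW : Set.MapsTo par W W) :
    Set.MapsTo par (W ∪ branch par v a) (W ∪ branch par v a) := by
  rintro x (hx | ⟨i, hi, rfl⟩)
  · exact Or.inl (hW hx)
  · change par (par^[i] v) ∈ _
    rw [← Function.iterate_succ_apply' par i v]
    rcases Nat.lt_or_eq_of_le (Nat.succ_le_of_lt hi) with hlt | heq
    · exact Or.inr (iterate_mem_branch v hlt)
    · exact Or.inl (heq ▸ h.1)

theorem of_iterate_eq (h : IsBranch par W v a) (hW : Set.MapsTo par W W) (hi : i < a)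
    (hy : par^[n] y = par^[i] v) : IsBranch par W y (n + (a - i)) := by
  have hshift (j : ℕ) : par^[n + j] y = par^[i + j] v := by
    rw [add_comm n, add_comm i, Function.iterate_add_apply, hy, ← Function.iterate_add_apply]
  refine ⟨?_, fun j hj hmem => h.2 (a - 1) (by omega) ?_⟩
  · rw [hshift, Nat.add_sub_cancel' hi.le]
    exact h.1
  · have hlast := hW.iterate (n + (a - i) - 1 - j) hmem
    rwa [← Function.iterate_add_apply,
      show n + (a - i) - 1 - j + j = n + (a - i - 1) by omega, hshift,
      show i + (a - i - 1) = a - 1 by omega] at hlast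

end IsBranch

namespace IsParentMap

theorem le_dist_of_isBranch (h : IsParentMap G r par) (hr : r ∈ W) (hv : IsBranch par W v a) :
    a ≤ G.dist r v := by
  by_contra! hlt
  exact hv.2 _ hlt (by rwa [h.iterate_dist])

theorem isBranch_root (h : IsParentMap G r par) (v : V) : IsBranch par {r} v (G.dist r v) := by
  refine ⟨h.iterate_dist v, fun i hi hmem => ?_⟩
  rw [Set.mem_singleton_iff, ← h.dist_eq_zero, h.dist_iterate] at hmem
  omega

theorem dist_eq_of_isBranch_root (h : IsParentMap G r par) (hv : IsBranch par {r} v a) :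
    G.dist r v = a := by
  have hle := h.le_dist_of_isBranch (Set.mem_singleton r) hv
  have hroot := h.dist_eq_zero.2 hv.1
  rw [h.dist_iterate] at hroot
  omega

theorem notMem_branch_par (h : IsParentMap G r par) (hv : v ≠ r) (a : ℕ) :
    v ∉ branch par (par v) a := by
  rintro ⟨i, -, hi : par^[i] (par v) = v⟩
  have hd := h.dist_eq v hv
  have hdi := h.dist_iterate i (par v)
  rw [hi] at hdi
  omega

end IsParentMap

/-- The maximum path partition process in terms of a parent map: a longest branch hanging off `W`
is recorded and added to `W`, until `W` contains every vertex. -/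
inductive IsMaxBranchPartition (par : V → V) : Set V → List ℕ → Prop
  | nil : IsMaxBranchPartition par Set.univ []
  | cons {W : Set V} {v : V} {a : ℕ} {L : List ℕ} (hv : IsBranch par W v a)
      (hmax : ∀ y n, IsBranch par W y n → n ≤ a)
      (hL : IsMaxBranchPartition par (W ∪ branch par v a) L) : IsMaxBranchPartition par W (a :: L)

theorem IsMaxBranchPartition.of_cons {L : List ℕ} (h : IsMaxBranchPartition par W (a :: L)) :
    ∃ v, IsBranch par W v a ∧ (∀ y n, IsBranch par W y n → n ≤ a) ∧
      IsMaxBranchPartition par (W ∪ branch par v a) L := by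
  cases h with
  | cons hv hmax hL => exact ⟨_, hv, hmax, hL⟩

end Branch

/-! ### From path partitions to branch partitions -/

section PathPartition

variable {V : Type*} {G : SimpleGraph V} {r u v y : V} {par : V → V} {W : Set V} {n : ℕ}

/-- The edges joining the vertices outside `W` to their parents. -/
def edgesOff (par : V → V) (W : Set V) : Set (Sym2 V) :=
  (fun x => s(x, par x)) '' Wᶜ

/-- The walk `p` moves away from the root at each step, and avoids `W` after its first vertex. -/
def IsDescending (par : V → V) (W : Set V) (p : G.Walk u v) : Prop :=
  ∀ i < p.length, p.getVert (i + 1) ∉ W ∧ par (p.getVert (i + 1)) = p.getVert i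

theorem eq_univ_of_edgesOff_eq_empty (h : edgesOff par W = ∅) : W = Set.univ := by
  rwa [edgesOff, Set.image_eq_empty, Set.compl_empty_iff] at h

theorem IsParentMap.edgesOff_root (h : IsParentMap G r par) : edgesOff par {r} = G.edgeSet := by
  ext e
  constructor
  · rintro ⟨x, hx, rfl⟩
    exact h.adj_par hx
  · induction e with
    | _ u v =>
      intro huv
      rcases (h.adj_iff u v).1 huv with ⟨hu, rfl⟩ | ⟨hv, rfl⟩
      · exact ⟨u, hu, rfl⟩
      · exact ⟨v, hv, Sym2.eq_swap⟩

theorem isDescending_of_isPath {p : G.Walk u v} (hp : p.IsPath) (hu : u ∈ W)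
    (hF : ∀ e ∈ p.edges, e ∈ edgesOff par W) : IsDescending par W p := by
  intro i hi
  obtain ⟨x, hx, he⟩ := hF _ (p.mk_mem_edges_iff_exists.2 ⟨i, hi, rfl⟩)
  rcases Sym2.eq_iff.1 he with ⟨hxi, hpar⟩ | ⟨rfl, hpar⟩
  · -- An upward step is impossible at `u ∈ W`, and later it would undo the preceding step down.
    exfalso
    cases i with
    | zero => exact hx (by rwa [hxi, Walk.getVert_zero])
    | succ i =>
      have hprev := (isDescending_of_isPath hp hu hF i (by omega)).2
      rw [← hxi, hpar] at hprev
      have := hp.getVert_injOn (by simp; omega) (by simp; omega) hprev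
      omega
  · exact ⟨hx, hpar⟩

namespace IsDescending

variable {p : G.Walk u v}

theorem iterate_eq_getVert (h : IsDescending par W p) {i : ℕ} (hi : i ≤ p.length) :
    par^[i] v = p.getVert (p.length - i) := by
  induction i with
  | zero => simp
  | succ i ih =>
    have hstep := (h (p.length - (i + 1)) (by omega)).2
    rwa [show p.length - (i + 1) + 1 = p.length - i by omega, ← ih (by omega),
      ← Function.iterate_succ_apply' par] at hstep

theorem isBranch (h : IsDescending par W p) (hu : u ∈ W) : IsBranch par W v p.length := by
  refine ⟨?_, fun i hi => ?_⟩
  · rwa [h.iterate_eq_getVert le_rfl, Nat.sub_self, Walk.getVert_zero]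
  · rw [h.iterate_eq_getVert hi.le, show p.length - i = p.length - i - 1 + 1 by omega]
    exact (h _ (by omega)).1

theorem union_branch (h : IsDescending par W p) (hu : u ∈ W) :
    W ∪ branch par v p.length = W ∪ {x | x ∈ p.support} := by
  refine Set.Subset.antisymm (Set.union_subset_union_right W ?_)
    (Set.union_subset Set.subset_union_left ?_)
  · rintro _ ⟨i, hi, rfl⟩
    exact Walk.mem_support_iff_exists_getVert.2
      ⟨_, (h.iterate_eq_getVert (le_of_lt hi)).symm, by omega⟩
  · intro x hx
    obtain ⟨n, rfl, hn⟩ := Walk.mem_support_iff_exists_getVert.1 hx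
    rcases Nat.eq_zero_or_pos n with rfl | hpos
    · exact Or.inl (by rwa [Walk.getVert_zero])
    · refine Or.inr ⟨p.length - n, Nat.sub_lt_self hpos hn, ?_⟩
      simp only [h.iterate_eq_getVert (Nat.sub_le _ _), Nat.sub_sub_self hn]

theorem edge_mem_edges_iff (h : IsDescending par W p) (hu : u ∈ W) {x : V} (hx : x ∉ W) :
    s(x, par x) ∈ p.edges ↔ x ∈ p.support := by
  refine ⟨p.fst_mem_support_of_mem_edges, fun hmem => ?_⟩
  obtain ⟨_ | n, rfl, hn⟩ := Walk.mem_support_iff_exists_getVert.1 hmem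
  · exact absurd (by rwa [Walk.getVert_zero]) hx
  · rw [(h n hn).2, Sym2.eq_swap]
    exact p.mk_mem_edges_iff_exists.2 ⟨n, hn, rfl⟩

theorem edgesOff_sdiff_edges (h : IsDescending par W p) (hu : u ∈ W) :
    edgesOff par W \ {e | e ∈ p.edges} = edgesOff par (W ∪ {x | x ∈ p.support}) := by
  ext e
  constructor
  · rintro ⟨⟨x, hx, rfl⟩, he⟩
    exact ⟨x, not_or.2 ⟨hx, fun hmem => he ((h.edge_mem_edges_iff hu hx).2 hmem)⟩, rfl⟩
  · rintro ⟨x, hx, rfl⟩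
    obtain ⟨hxW, hxp⟩ := not_or.1 hx
    exact ⟨⟨x, hxW, rfl⟩, fun he => hxp ((h.edge_mem_edges_iff hu hxW).1 he)⟩

end IsDescending

namespace IsParentMap

theorem exists_isPath_of_isBranch (h : IsParentMap G r par) (hr : r ∈ W)
    (hy : IsBranch par W y n) :
    ∃ z ∈ W, ∃ q : G.Walk y z, q.IsPath ∧ q.length = n ∧
      (∀ x ∈ q.support, G.dist r x ≤ G.dist r y) ∧ ∀ e ∈ q.edges, e ∈ edgesOff par W := by
  induction n generalizing y with
  | zero => exact ⟨y, hy.1, Walk.nil, by simp, rfl, by simp, by simp⟩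
  | succ n ih =>
    have hyW : y ∉ W := hy.2 0 n.succ_pos
    have hyr : y ≠ r := fun heq => hyW (heq ▸ hr)
    have hd := h.dist_eq y hyr
    obtain ⟨z, hz, q, hq, hlen, hdist, hedge⟩ := ih hy.of_succ
    refine ⟨z, hz, Walk.cons (h.adj_par hyr) q, hq.cons fun hmem => ?_, ?_, ?_, ?_⟩
    · have := hdist y hmem
      omega
    · rw [Walk.length_cons, hlen]
    · rw [Walk.support_cons, List.forall_mem_cons]
      exact ⟨le_rfl, fun x hx => (hdist x hx).trans (by omega)⟩
    · rw [Walk.edges_cons, List.forall_mem_cons]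
      exact ⟨⟨y, hyW, rfl⟩, hedge⟩

theorem isMaxBranchPartition {V : Type} {G : SimpleGraph V} {r : V} {par : V → V} {W : Set V}
    {L : List ℕ} (h : IsParentMap G r par) (hr : r ∈ W) (hP : MaxPP G (edgesOff par W) W L) :
    IsMaxBranchPartition par W L := by
  generalize hF : edgesOff par W = F at hP
  induction hP with
  | nil W =>
    rw [eq_univ_of_edgesOff_eq_empty hF]
    exact .nil
  | cons F W p hu hp hpF hmax L _ ih =>
    subst hF
    have hdesc := isDescending_of_isPath hp hu hpF
    refine .cons (hdesc.isBranch hu) (fun y n hy => ?_) ?_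
    · obtain ⟨z, hz, q, hq, hlen, -, hedge⟩ := h.exists_isPath_of_isBranch hr hy
      rw [← hlen, ← q.length_reverse]
      exact hmax q.reverse hz hq.reverse (by simpa using hedge)
    · rw [hdesc.union_branch hu]
      exact ih (Or.inl hr) (hdesc.edgesOff_sdiff_edges hu).symm

end IsParentMap

end PathPartition

/-! ### The upper bound -/

section UpperBound

open Finset

variable {V : Type} [Fintype V] {G : SimpleGraph V} {r v : V} {par : V → V} {W : Set V} {a i k : ℕ}
  {L : List ℕ}

theorem exists_pebStep {C : V → ℕ} {u v : V} (huv : G.Adj u v) (hu : 2 ≤ C u) :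
    ∃ C', PebStep G C C' ∧
      ∀ w : V → ℕ, ∑ x, C' x * w x + 2 * w u = ∑ x, C x * w x + w v := by
  classical
  have hle : Pi.single u 2 ≤ C := by
    intro x
    by_cases hx : x = u
    · simpa [hx] using hu
    · simp [hx]
  obtain ⟨C₀, rfl⟩ : ∃ C₀, C = C₀ + Pi.single u 2 :=
    ⟨C - Pi.single u 2, (tsub_add_cancel_of_le hle).symm⟩
  refine ⟨C₀ + Pi.single v 1, ⟨u, v, huv, hu, ?_, ?_, fun w hwu hwv => ?_⟩, fun w => ?_⟩
  · simp [huv.ne]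
  · simp [huv.ne']
  · simp [hwu, hwv]
  · simp only [Pi.add_apply, add_mul, sum_add_distrib, Pi.single_apply, ite_mul, zero_mul,
      sum_ite_eq', mem_univ, if_true]
    omega

variable {w : V → ℕ}

theorem exists_reflTransGen_pebStep_le_one (hadj : ∀ v, v ≠ r → G.Adj v (par v))
    (hw : ∀ v, v ≠ r → 2 * w v ≤ w (par v)) (C : V → ℕ) :
    ∃ C', Relation.ReflTransGen (PebStep G) C C' ∧
      ∑ x, C x * w x ≤ ∑ x, C' x * w x ∧ ∀ v, v ≠ r → C' v ≤ 1 := by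
  induction hn : ∑ x, C x using Nat.strong_induction_on generalizing C with
  | _ n ih =>
    by_cases hC : ∀ v, v ≠ r → C v ≤ 1
    · exact ⟨C, .refl, le_rfl, hC⟩
    · push Not at hC
      obtain ⟨u, hur, hu⟩ := hC
      obtain ⟨C₁, hstep, hweight⟩ := exists_pebStep (hadj u hur) hu
      have hcard := hweight fun _ => 1
      simp only [mul_one] at hcard
      obtain ⟨C', hsteps, hle, hC'⟩ := ih (∑ x, C₁ x) (by omega) C₁ rfl
      have := hweight w
      have := hw u hur
      exact ⟨C', .head hstep hsteps, by omega, hC'⟩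

theorem tSolvable_of_lt_sum_mul [DecidableEq V] (hadj : ∀ v, v ≠ r → G.Adj v (par v))
    (hw : ∀ v, v ≠ r → 2 * w v ≤ w (par v)) {C : V → ℕ} {t : ℕ}
    (hC : t * w r + ∑ x ∈ univ.erase r, w x < ∑ x, C x * w x + w r) : TSolvable G C r t := by
  obtain ⟨C', hsteps, hle, hC'⟩ := exists_reflTransGen_pebStep_le_one hadj hw C
  refine ⟨C', hsteps, ?_⟩
  by_contra! hlt
  have hroot : (C' r + 1) * w r ≤ t * w r := Nat.mul_le_mul_right _ hlt
  have hrest : ∑ x ∈ univ.erase r, C' x * w x ≤ ∑ x ∈ univ.erase r, w x :=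
    sum_le_sum fun x hx => mul_le_of_le_one_left' (hC' x (ne_of_mem_erase hx))
  rw [← add_sum_erase _ (fun x => C' x * w x) (mem_univ r)] at hle
  rw [add_one_mul] at hroot
  omega

open Classical in
/-- The greatest distance from `v` to a vertex in the subtree below `v`. -/
noncomputable def height (G : SimpleGraph V) (r : V) (par : V → V) (v : V) : ℕ :=
  ({y | ∃ n, par^[n] y = v} : Finset V).sup fun y => G.dist r y - G.dist r v

theorem height_le_iff :
    height G r par v ≤ k ↔ ∀ y n, par^[n] y = v → G.dist r y - G.dist r v ≤ k := by
  simp only [height, Finset.sup_le_iff, mem_filter_univ, forall_exists_index]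

namespace IsParentMap

theorem height_lt_height_par (h : IsParentMap G r par) (hv : v ≠ r) :
    height G r par v < height G r par (par v) := by
  have hd := h.dist_eq v hv
  have hle := height_le_iff (G := G) (r := r) (par := par) (v := par v).1 le_rfl
  have hpos := hle v 1 rfl
  suffices height G r par v ≤ height G r par (par v) - 1 by omega
  refine height_le_iff.2 fun y n hy => ?_
  have hyp := hle y (n + 1) (by rw [Function.iterate_succ_apply', hy])
  have hdy := h.dist_iterate n y
  rw [hy] at hdy
  omega

theorem height_root (h : IsParentMap G r par) (hv : IsBranch par {r} v a)
    (hmax : ∀ y n, IsBranch par {r} y n → n ≤ a) : height G r par r = a := by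
  refine le_antisymm (height_le_iff.2 fun y _ _ => ?_) ?_
  · exact (Nat.sub_le _ _).trans (hmax y _ (h.isBranch_root y))
  · have hle := height_le_iff (G := G) (r := r) (par := par).1 le_rfl v a hv.1
    rwa [h.dist_eq_of_isBranch_root hv, dist_self, Nat.sub_zero] at hle

theorem height_iterate_le (h : IsParentMap G r par) (hW : Set.MapsTo par W W)
    (hv : IsBranch par W v a) (hmax : ∀ y n, IsBranch par W y n → n ≤ a) (hi : i < a) :
    height G r par (par^[i] v) ≤ i := by
  refine height_le_iff.2 fun y n hy => ?_
  have hlen := hmax y _ (hv.of_iterate_eq hW hi hy)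
  rw [← hy, h.dist_iterate]
  omega

open Classical in
theorem sum_two_pow_height_le (h : IsParentMap G r par) (hW : Set.MapsTo par W W)
    (hP : IsMaxBranchPartition par W L) :
    ∑ x with x ∉ W, 2 ^ height G r par x ≤ (L.map fun a => 2 ^ a - 1).sum := by
  induction hP with
  | nil => simp
  | @cons W v a L hv hmax _ ih =>
    have hcover : ({x | x ∉ W} : Finset V) ⊆
        (range a).image (fun i => par^[i] v) ∪ univ.filter (· ∉ W ∪ branch par v a) := by
      intro x hx
      by_cases hb : x ∈ branch par v a
      · obtain ⟨i, hi, rfl⟩ := hb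
        exact mem_union_left _ (mem_image_of_mem _ (mem_range.2 hi))
      · exact mem_union_right _ (by simp_all)
    have hbranch : ∑ x ∈ (range a).image (fun i => par^[i] v), 2 ^ height G r par x ≤ 2 ^ a - 1 :=
      calc
        _ ≤ ∑ i ∈ range a, 2 ^ height G r par (par^[i] v) :=
          sum_image_le_of_nonneg (f := fun x => 2 ^ height G r par x) fun _ _ => Nat.zero_le _
        _ ≤ ∑ i ∈ range a, 2 ^ i := sum_le_sum fun i hi =>
          Nat.pow_le_pow_right two_pos (h.height_iterate_le hW hv hmax (mem_range.1 hi))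
        _ = 2 ^ a - 1 := by simp [Nat.geomSum_eq]
    calc
      ∑ x with x ∉ W, 2 ^ height G r par x
      _ ≤ ∑ x ∈ (range a).image (fun i => par^[i] v) ∪ univ.filter (· ∉ W ∪ branch par v a),
            2 ^ height G r par x := sum_le_sum_of_subset hcover
      _ ≤ ∑ x ∈ (range a).image (fun i => par^[i] v), 2 ^ height G r par x +
            ∑ x with x ∉ W ∪ branch par v a, 2 ^ height G r par x := Nat.le.intro sum_union_inter
      _ ≤ (2 ^ a - 1) + (L.map fun a => 2 ^ a - 1).sum :=
        Nat.add_le_add hbranch (by convert ih (hv.mapsTo_union hW))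

theorem tSolvable_of_le_sum (h : IsParentMap G r par) (hP : IsMaxBranchPartition par {r} (a :: L))
    {t : ℕ} {C : V → ℕ} (hC : t * 2 ^ a + (L.map fun a => 2 ^ a - 1).sum ≤ ∑ x, C x) :
    TSolvable G C r t := by
  classical
  have hsum := h.sum_two_pow_height_le (by simp [h.map_root]) hP
  obtain ⟨v, hv, hmax, -⟩ := hP.of_cons
  have hroot := h.height_root hv hmax
  refine tSolvable_of_lt_sum_mul (w := fun x => 2 ^ height G r par x) (fun _ => h.adj_par)
    (fun v hv => ?_) ?_
  · rw [← pow_succ']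
    exact Nat.pow_le_pow_right two_pos (h.height_lt_height_par hv)
  · have hle : ∑ x, C x ≤ ∑ x, C x * 2 ^ height G r par x :=
      sum_le_sum fun x _ => Nat.le_mul_of_pos_right _ (Nat.two_pow_pos _)
    simp only [Set.mem_singleton_iff, filter_ne', List.map_cons, List.sum_cons] at hsum
    have := Nat.two_pow_pos a
    rw [hroot]
    omega

end IsParentMap

end UpperBound

/-! ### The lower bound -/

section LowerBound

variable {V : Type*} [Fintype V] [DecidableEq V] {par : V → V} {C C' m : V → ℕ} {v x : V} {k : ℕ}

/-- The number of pebbles that arrive at `x` when each child `c` of `x` passes on as many as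
possible of its `m c` pebbles. -/
def childSum (par : V → V) (m : V → ℕ) (x : V) : ℕ :=
  ∑ c with c ≠ x ∧ par c = x, m c / 2

/-- The certificate `m` bounds the number of pebbles that can be gathered at each vertex by moves
towards the root, starting from the configuration `C`. -/
def IsCap (par : V → V) (C m : V → ℕ) : Prop :=
  ∀ x, C x + childSum par m x ≤ m x

theorem childSum_update_of_ne (hx : par v ≠ x) (m : V → ℕ) (k : ℕ) :
    childSum par (Function.update m v k) x = childSum par m x := by
  refine Finset.sum_congr rfl fun c hc => ?_
  rw [Function.update_of_ne]
  rintro rfl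
  exact hx (Finset.mem_filter.1 hc).2.2

theorem childSum_update_par (hv : par v ≠ v) (m : V → ℕ) (k : ℕ) :
    childSum par (Function.update m v k) (par v) + m v / 2 = childSum par m (par v) + k / 2 := by
  have hmem : v ∈ ({c | c ≠ par v ∧ par c = par v} : Finset V) := by simp [hv.symm]
  have hrest : ∑ c ∈ ({c | c ≠ par v ∧ par c = par v} : Finset V).erase v,
      Function.update m v k c / 2 = ∑ c ∈ ({c | c ≠ par v ∧ par c = par v} : Finset V).erase v,
        m c / 2 :=
    Finset.sum_congr rfl fun c hc => by rw [Function.update_of_ne (Finset.ne_of_mem_erase hc)]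
  rw [childSum, childSum, ← Finset.add_sum_erase _ _ hmem, ← Finset.add_sum_erase _ (m · / 2) hmem,
    hrest, Function.update_self]
  omega

namespace IsCap

theorem zero : IsCap par 0 0 := fun x => by simp [childSum]

theorem update (hm : IsCap par C m) (hv : par v ≠ v)
    (hself : C' v + m v ≤ C v + k) (hpar : C' (par v) + k / 2 ≤ C (par v) + m v / 2)
    (hne : ∀ x, x ≠ v → x ≠ par v → C' x ≤ C x) : IsCap par C' (Function.update m v k) := by
  intro x
  have hx := hm x
  by_cases hxv : x = v
  · subst hxv
    rw [childSum_update_of_ne hv, Function.update_self]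
    omega
  · rw [Function.update_of_ne hxv]
    by_cases hxp : x = par v
    · subst hxp
      have := childSum_update_par hv m k
      omega
    · rw [childSum_update_of_ne (Ne.symm hxp)]
      have := hne x hxv hxp
      omega

theorem add_single_of_isFixedPt {r : V} (hm : IsCap par C m)
    (hr : Function.IsFixedPt par r) (n : ℕ) :
    IsCap par (C + Pi.single r n) (Function.update m r (m r + n)) := by
  intro x
  have hx := hm x
  have hchild : childSum par (Function.update m r (m r + n)) x = childSum par m x := by
    refine Finset.sum_congr rfl fun c hc => ?_
    rw [Function.update_of_ne]
    rintro rfl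
    obtain ⟨hne, heq⟩ := (Finset.mem_filter.1 hc).2
    exact hne (hr.symm.trans heq)
  rw [hchild]
  by_cases hxr : x = r
  · subst hxr
    simp only [Pi.add_apply, Pi.single_eq_same, Function.update_self]
    omega
  · simpa [hxr] using hx

end IsCap

end LowerBound

section LowerBoundTree

variable {V : Type} [Fintype V] {G : SimpleGraph V} {par : V → V} {C C' m : V → ℕ} {r v : V}
  {W : Set V} {L : List ℕ} {a n t : ℕ}

namespace IsCap

variable [DecidableEq V]

theorem exists_of_pebStep (h : IsParentMap G r par) (hm : IsCap par C m) (hstep : PebStep G C C') :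
    ∃ m', IsCap par C' m' ∧ m' r = m r := by
  obtain ⟨u, v, huv, hu2, hu, hv, hne⟩ := hstep
  rcases (h.adj_iff u v).1 huv with ⟨hur, rfl⟩ | ⟨hvr, rfl⟩
  · have := hm u
    refine ⟨Function.update m u (m u - 2), hm.update huv.ne' (by omega) (by omega)
      fun x hxu hxp => (hne x hxu hxp).le, Function.update_of_ne hur.symm _ _⟩
  · refine ⟨Function.update m v (m v + 1), hm.update huv.ne (by omega) (by omega)
      fun x hxv hxp => (hne x hxp hxv).le, Function.update_of_ne hvr.symm _ _⟩

theorem not_tSolvable (h : IsParentMap G r par) (hm : IsCap par C m) (ht : m r < t) :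
    ¬ TSolvable G C r t := by
  rintro ⟨C', hsteps, hC'⟩
  obtain ⟨m', hm', heq⟩ : ∃ m', IsCap par C' m' ∧ m' r = m r := by
    clear hC'
    induction hsteps with
    | refl => exact ⟨m, hm, rfl⟩
    | tail _ hstep ih =>
      obtain ⟨m₁, hm₁, heq₁⟩ := ih
      obtain ⟨m₂, hm₂, heq₂⟩ := exists_of_pebStep h hm₁ hstep
      exact ⟨m₂, hm₂, heq₂.trans heq₁⟩
  have := hm' r
  omega

theorem exists_add_single (h : IsParentMap G r par) (hav : a ≤ G.dist r v)
    (hzero : ∀ x ∈ branch par v a, m x = 0)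
    (hm : IsCap par (C + Pi.single (par^[a] v) (n / 2 ^ a)) m) :
    ∃ m', IsCap par (C + Pi.single v n) m' ∧ ∀ x ∉ branch par v a, m' x = m x := by
  induction a generalizing v n with
  | zero => exact ⟨m, by simpa using hm, fun _ _ => rfl⟩
  | succ a ih =>
    have hvr : v ≠ r := fun heq => by simp [heq] at hav
    have hd := h.dist_eq v hvr
    have hpv : par v ≠ v := (h.adj_par hvr).ne'
    simp only [branch_succ, Set.mem_insert_iff, forall_eq_or_imp, not_or] at hzero ⊢
    rw [Function.iterate_succ_apply, pow_succ', ← Nat.div_div_eq_div_mul] at hm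
    obtain ⟨m', hm', heq⟩ := ih (by omega) hzero.2 hm
    have hm'v : m' v = 0 := (heq v (h.notMem_branch_par hvr a)).trans hzero.1
    refine ⟨Function.update m' v n, hm'.update hpv ?_ ?_ fun x hxv hxp => ?_, fun x hx => ?_⟩
    · simp [hm'v, hpv.symm]
    · simp [hpv]
    · simp [hxv, hxp]
    · rw [Function.update_of_ne hx.1, heq x hx.2]

end IsCap

namespace IsParentMap

theorem exists_isCap [DecidableEq V] (h : IsParentMap G r par) (hr : r ∈ W)
    (hP : IsMaxBranchPartition par W L) :
    ∃ C m, IsCap par C m ∧ (∀ x ∈ W, m x = 0) ∧ ∑ x, C x = (L.map fun a => 2 ^ a - 1).sum := by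
  induction hP with
  | nil => exact ⟨0, 0, .zero, fun _ _ => rfl, by simp⟩
  | @cons W v a L hv _ _ ih =>
    obtain ⟨C, m, hm, hzero, hsum⟩ := ih (Or.inl hr)
    have hdiv : (2 ^ a - 1) / 2 ^ a = 0 :=
      Nat.div_eq_of_lt (Nat.sub_lt (Nat.two_pow_pos a) one_pos)
    obtain ⟨m', hm', heq⟩ := IsCap.exists_add_single (C := C) (n := 2 ^ a - 1) h
      (h.le_dist_of_isBranch hr hv) (fun x hx => hzero x (Or.inr hx)) (by simpa [hdiv] using hm)
    refine ⟨_, m', hm', fun x hx => ?_, ?_⟩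
    · rw [heq x fun hb => hv.notMem hb hx, hzero x (Or.inl hx)]
    · simp [Finset.sum_add_distrib, hsum, add_comm]

theorem exists_not_tSolvable (h : IsParentMap G r par)
    (hP : IsMaxBranchPartition par {r} (a :: L)) (ht : 1 ≤ t) :
    ∃ C : V → ℕ, ∑ x, C x + 1 = t * 2 ^ a + (L.map fun a => 2 ^ a - 1).sum ∧
      ¬ TSolvable G C r t := by
  classical
  obtain ⟨v, hv, -, hL⟩ := hP.of_cons
  obtain ⟨C, m, hm, hzero, hsum⟩ := h.exists_isCap (Or.inl (Set.mem_singleton r)) hL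
  have hpos : 0 < t * 2 ^ a := Nat.mul_pos ht (Nat.two_pow_pos a)
  have hroot : par^[a] v = r := hv.1
  have hdiv : (t * 2 ^ a - 1) / 2 ^ a < t :=
    (Nat.div_lt_iff_lt_mul (Nat.two_pow_pos a)).2 (Nat.sub_lt hpos one_pos)
  have hmr : IsCap par (C + Pi.single (par^[a] v) ((t * 2 ^ a - 1) / 2 ^ a))
      (Function.update m r (m r + (t * 2 ^ a - 1) / 2 ^ a)) :=
    hroot ▸ hm.add_single_of_isFixedPt h.map_root _
  obtain ⟨m', hm', heq⟩ := IsCap.exists_add_single (n := t * 2 ^ a - 1) h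
    (h.dist_eq_of_isBranch_root hv).ge
    (fun x hx => by rw [Function.update_of_ne (hv.notMem hx), hzero x (Or.inr hx)]) hmr
  refine ⟨_, ?_, hm'.not_tSolvable h ?_⟩
  · simp only [Pi.add_apply, Finset.sum_add_distrib, hsum, Finset.sum_pi_single',
      Finset.mem_univ, if_true]
    omega
  · rwa [heq r fun hb => hv.notMem hb rfl, Function.update_self, hzero r (Or.inl rfl), zero_add]

end IsParentMap

end LowerBoundTree

theorem sum_map_two_pow_sub_one (L : List ℕ) :
    (L.map fun a => 2 ^ a - 1).sum + L.length = (L.map fun a => 2 ^ a).sum := by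
  induction L with
  | nil => rfl
  | cons a L ih =>
    have := Nat.two_pow_pos a
    simp only [List.map_cons, List.sum_cons, List.length_cons]
    omega

theorem piT_eq_sum_add_one {V : Type} [Fintype V] {G : SimpleGraph V} {r : V} {t : ℕ} {C : V → ℕ}
    (hC : ¬ TSolvable G C r t)
    (hsolv : ∀ C' : V → ℕ, ∑ x, C x < ∑ x, C' x → TSolvable G C' r t) :
    piT G r t = ∑ x, C x + 1 := by
  simp only [piT, finsum_eq_sum_of_fintype]
  refine IsLeast.csInf_eq ⟨hsolv, fun s hs => ?_⟩
  by_contra! hlt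
  exact hC (hs C (Nat.le_of_lt_succ hlt))

/-- for a tree `T` with a maximum `r`-path partition of path lengths
`a₁ ≥ a₂ ≥ ⋯ ≥ a_k`, we have `π_t(T,r) = t·2^{a₁} + Σ_{i=2}^k 2^{a_i} − k + 1`. -/
theorem tree_t_pebbling_number {V : Type} [Fintype V] (T : SimpleGraph V)
    (hconn : T.Connected) (hac : T.IsAcyclic) (r : V) (t : ℕ) (ht : 1 ≤ t)
    (a₁ : ℕ) (L : List ℕ)
    (hpart : MaxPP T T.edgeSet {r} (a₁ :: L)) :
    piT T r t = t * 2 ^ a₁ + (L.map fun a => 2 ^ a).sum + 1 - (a₁ :: L).length := by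
  obtain ⟨par, h⟩ := exists_isParentMap ⟨hconn, hac⟩ r
  have hP : IsMaxBranchPartition par {r} (a₁ :: L) :=
    h.isMaxBranchPartition (Set.mem_singleton r) (h.edgesOff_root ▸ hpart)
  obtain ⟨C, hsum, hC⟩ := h.exists_not_tSolvable hP ht
  have hsolv (C' : V → ℕ) (hlt : ∑ x, C x < ∑ x, C' x) : TSolvable T C' r t :=
    h.tSolvable_of_le_sum hP (hsum ▸ hlt)
  rw [piT_eq_sum_add_one hC hsolv, hsum, ← sum_map_two_pow_sub_one, List.length_cons]
  omega
end

section
/- If G is a 2-path on n vertices with diameter d ≤ 2, then π_t(G) = t·2^d + n − 2d. -/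
open SimpleGraph

/-- `G` is a 2-tree: either `K₂` or obtained by adding a 2-simplicial vertex to a
2-tree. -/
inductive IsTwoTree : {V : Type} → SimpleGraph V → Prop
  | base {V : Type} (G : SimpleGraph V) (e : V ≃ Fin 2)
      (h : ∀ a b : V, G.Adj a b ↔ a ≠ b) : IsTwoTree G
  | extend {V : Type} (G : SimpleGraph V) (v : V)
      (hdeg : (G.neighborSet v).ncard = 2)
      (hcl : G.IsClique (G.neighborSet v))
      (h : IsTwoTree (G.induce {u | u ≠ v})) : IsTwoTree G

/-- A simplicial vertex: its neighborhood is a clique. -/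
def IsSimplicial {V : Type} (G : SimpleGraph V) (v : V) : Prop :=
  G.IsClique (G.neighborSet v)

/-- A 2-path: a 2-tree with exactly two simplicial vertices. -/
def IsTwoPath {V : Type} (G : SimpleGraph V) : Prop :=
  IsTwoTree G ∧ {v | IsSimplicial G v}.ncard = 2

/-- The edges of the `i`-th fan of a fan decomposition with spine `x` and fan
vertices `v i 1, …, v i (k i)`. -/
def FanEdge {V : Type} (x : ℕ → V) (k : ℕ → ℕ) (v : ℕ → ℕ → V) (i : ℕ)
    (a b : V) : Prop :=
  s(a, b) = s(x (i - 1), x i) ∨ s(a, b) = s(x i, x (i + 1)) ∨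
  s(a, b) = s(x (i - 1), v i 1) ∨ s(a, b) = s(v i (k i), x (i + 1)) ∨
  (∃ j, 1 ≤ j ∧ j < k i ∧ s(a, b) = s(v i j, v i (j + 1))) ∨
  (∃ j, 1 ≤ j ∧ j ≤ k i ∧ s(a, b) = s(x i, v i j))

/-- The set of fan vertices of the `i`-th fan. -/
def FanVerts {V : Type} (k : ℕ → ℕ) (v : ℕ → ℕ → V) (i : ℕ) : Set V :=
  {w | ∃ j, 1 ≤ j ∧ j ≤ k i ∧ w = v i j}

/-- `FanData G d x k v` : the data `(x, k, v)` exhibits `G` as an overlapping fan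
graph of diameter `d` with spine `x 0, x 1, …, x d` and, for `1 ≤ i ≤ d − 1`, an
`x_{i−1}x_{i+1}`-fan centered on `x i` with fan vertices `v i 1, …, v i (k i)`;
consecutive fans are opposite-sided or same-sided, and `G` is the union of the
fans. -/
def FanData {V : Type} (G : SimpleGraph V) (d : ℕ) (x : ℕ → V) (k : ℕ → ℕ)
    (v : ℕ → ℕ → V) : Prop :=
  2 ≤ d ∧
  -- the spine is a shortest path between two vertices realizing the diameter
  (∀ u w : V, G.dist u w ≤ d) ∧ G.dist (x 0) (x d) = d ∧
  (∀ i < d, G.Adj (x i) (x (i + 1))) ∧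
  (∀ i ≤ d, ∀ l ≤ d, x i = x l → i = l) ∧
  -- fan structure
  (∀ i, 1 ≤ i → i ≤ d - 1 →
    1 ≤ k i ∧
    G.Adj (x (i - 1)) (v i 1) ∧
    (∀ j, 1 ≤ j → j < k i → G.Adj (v i j) (v i (j + 1))) ∧
    G.Adj (v i (k i)) (x (i + 1)) ∧
    (∀ j, 1 ≤ j → j ≤ k i → G.Adj (x i) (v i j)) ∧
    (∀ j, 1 ≤ j → j ≤ k i → ∀ j', 1 ≤ j' → j' ≤ k i → v i j = v i j' → j = j') ∧
    (∀ j, 1 ≤ j → j ≤ k i → ∀ l ≤ d, v i j ≠ x l)) ∧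
  -- consecutive fans are opposite-sided or same-sided
  (∀ i, 1 ≤ i → i + 1 ≤ d - 1 →
    (FanVerts k v i ∩ FanVerts k v (i + 1) = ∅) ∨
    (v i (k i) = v (i + 1) 1 ∧
      FanVerts k v i ∩ FanVerts k v (i + 1) = {v i (k i)})) ∧
  -- G is the union of the fans: vertices
  (∀ u : V, (∃ l ≤ d, u = x l) ∨
    ∃ i, 1 ≤ i ∧ i ≤ d - 1 ∧ u ∈ FanVerts k v i) ∧
  -- G is the union of the fans: edges
  (∀ a b : V, G.Adj a b → ∃ i, 1 ≤ i ∧ i ≤ d - 1 ∧ FanEdge x k v i a b)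

/-- `G` is an overlapping fan graph. -/
def IsOverlappingFan {V : Type} (G : SimpleGraph V) : Prop :=
  ∃ (d : ℕ) (x : ℕ → V) (k : ℕ → ℕ) (v : ℕ → ℕ → V), FanData G d x k v

/-!
A vertex of a 2-tree that is adjacent to every other simplicial vertex is adjacent to every other
vertex. In a 2-path of diameter at most `2` the two simplicial vertices are adjacent or have a
common neighbor, so some vertex `c` is universal.

Upper bound: gathering at `c` all pairs of pebbles on the other vertices and moving on from there
to the root `r` is enough, unless every vertex besides `c` and `r` carries an odd number of
pebbles. Then one pair can travel to `r` along a path avoiding `c`, which exists since a 2-tree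
stays connected without `c`; the odd vertices on its way repay every pebble it loses except the
first.

Lower bound: take a root `r` of degree `2` and put one pebble on every vertex at distance `2` from
`r`, except for `4 * t - 1` pebbles on one of them. A potential that counts a pebble with weight
`4` on `r` and `2` next to `r`, but only counts the pairs farther away, starts below `4 * t` and
never increases.
-/

section Graph

variable {V : Type*} {G : SimpleGraph V} {c r v x y : V}

lemma exists_isPath_notMem_support (hconn : (G.induce {c}ᶜ).Preconnected)
    (hx : x ≠ c) (hy : y ≠ c) : ∃ p : G.Walk x y, p.IsPath ∧ c ∉ p.support := by
  obtain ⟨q, hq⟩ := (hconn ⟨x, hx⟩ ⟨y, hy⟩).exists_isPath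
  let f : G.induce {c}ᶜ ↪g G := Embedding.induce _
  refine ⟨q.map f.toHom, hq.map f.injective, fun hcp ↦ ?_⟩
  obtain ⟨z, -, hz⟩ := List.mem_map.1 (Walk.support_map f.toHom q ▸ hcp)
  exact z.2 hz

lemma dist_le_one_of_isUniversal (hc : G.IsUniversal c) (v : V) : G.dist c v ≤ 1 := by
  obtain rfl | hcv := eq_or_ne c v
  · simp
  · exact (dist_eq_one_iff_adj.2 (hc hcv)).le

lemma two_le_dist_iff (hG : G.Connected) : 2 ≤ G.dist r v ↔ r ≠ v ∧ ¬ G.Adj r v := by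
  rw [← hG.dist_eq_zero_iff.ne, ← dist_eq_one_iff_adj]
  lia

lemma exists_two_le_dist (hG : G.Connected) (hr : ¬ G.IsUniversal r) : ∃ w, 2 ≤ G.dist r w := by
  simpa [two_le_dist_iff hG, IsUniversal] using hr

end Graph

section Moves

variable {V : Type} {G : SimpleGraph V}

lemma exists_pebStep_of_adj [DecidableEq V] {u v : V} (h : G.Adj u v) {C : V → ℕ} (hC : 2 ≤ C u) :
    ∃ D, PebStep G C D ∧ D + Pi.single u 2 = C + Pi.single v 1 := by
  have huv := h.ne
  refine ⟨C - Pi.single u 2 + Pi.single v 1, ⟨u, v, h, hC, ?_, ?_, fun w hwu hwv ↦ ?_⟩, ?_⟩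
  · simp [huv, hC]
  · simp [huv.symm]
  · simp [hwu, hwv]
  · ext w
    simp only [Pi.add_apply, Pi.sub_apply, Pi.single_apply]
    grind

lemma exists_reflTransGen_of_adj [DecidableEq V] {u v : V} (h : G.Adj u v) (C : V → ℕ) {k : ℕ}
    (hk : 2 * k ≤ C u) :
    ∃ D, Relation.ReflTransGen (PebStep G) C D ∧
      D + Pi.single u (2 * k) = C + Pi.single v k := by
  induction k with
  | zero => exact ⟨C, .refl, by simp⟩
  | succ k ih =>
    obtain ⟨D, hCD, hD⟩ := ih (by lia)
    have hDu : D u + 2 * k = C u := by simpa [h.ne] using congrFun hD u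
    obtain ⟨E, hDE, hE⟩ := exists_pebStep_of_adj h (C := D) (by lia)
    refine ⟨E, hCD.tail hDE, ?_⟩
    calc E + Pi.single u (2 * (k + 1))
      _ = E + Pi.single u 2 + Pi.single u (2 * k) := by
        rw [add_assoc, ← Pi.single_add, mul_add, add_comm (2 * k)]
      _ = D + Pi.single u (2 * k) + Pi.single v 1 := by rw [hE, add_right_comm]
      _ = C + Pi.single v (k + 1) := by rw [hD, add_assoc, ← Pi.single_add]

lemma exists_reflTransGen_gather {c : V} {S : Finset V} (hS : ∀ v ∈ S, G.Adj v c) (C : V → ℕ) :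
    ∃ D, Relation.ReflTransGen (PebStep G) C D ∧ D c = C c + ∑ v ∈ S, C v / 2 ∧
      ∀ w ∉ S, w ≠ c → D w = C w := by
  classical
  induction S using Finset.induction with
  | empty => exact ⟨C, .refl, by simp⟩
  | insert v S hvS ih =>
    obtain ⟨D, hCD, hDc, hDw⟩ := ih fun w hw ↦ hS w (Finset.mem_insert_of_mem hw)
    have hvc : G.Adj v c := hS v (Finset.mem_insert_self v S)
    have hDv : D v = C v := hDw v hvS hvc.ne
    obtain ⟨E, hDE, hE⟩ := exists_reflTransGen_of_adj hvc D (k := C v / 2) (by lia)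
    refine ⟨E, hCD.trans hDE, ?_, fun w hw hwc ↦ ?_⟩
    · have hEc : E c = D c + C v / 2 := by simpa [hvc.ne'] using congrFun hE c
      rw [hEc, hDc, Finset.sum_insert hvS]
      ring
    · have hwv : w ≠ v := by grind
      have hEw : E w = D w := by simpa [hwv, hwc] using congrFun hE w
      rw [hEw, hDw w (by grind) hwc]

lemma exists_reflTransGen_of_isPath [DecidableEq V] {x r : V} {p : G.Walk x r} (hp : p.IsPath)
    {C : V → ℕ} (hx : x ≠ r → 2 ≤ C x) (hC : ∀ v ∈ p.support, v ≠ r → 1 ≤ C v) :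
    ∃ D, Relation.ReflTransGen (PebStep G) C D ∧
      D + Pi.single x 1 + {v | v ∈ p.support}.indicator 1 = C + Pi.single r 2 := by
  induction p generalizing C with
  | nil =>
    refine ⟨C, .refl, ?_⟩
    ext w
    simp only [Pi.add_apply, Pi.single_apply, Set.indicator_apply, Set.mem_ofPred_eq,
      Walk.support_nil, List.mem_singleton, Pi.one_apply]
    grind
  | @cons x y r h q ih =>
    rw [Walk.cons_isPath_iff] at hp
    obtain ⟨hq, hxq⟩ := hp
    have hxr : x ≠ r := fun hxr ↦ hxq (hxr ▸ q.end_mem_support)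
    obtain ⟨D, hCD, hD⟩ := exists_pebStep_of_adj h (hx hxr)
    have hDw (w) : D w + (if w = x then 2 else 0) = C w + if w = y then 1 else 0 := by
      simpa [Pi.single_apply] using congrFun hD w
    obtain ⟨E, hDE, hE⟩ := ih hq (C := D)
      (fun hyr ↦ by grind [Walk.support_cons, Walk.start_mem_support])
      (fun v hv hvr ↦ by grind [Walk.support_cons])
    refine ⟨E, .head hCD hDE, ?_⟩
    ext w
    have hEw := congrFun hE w
    simp only [Pi.add_apply, Pi.single_apply, Set.indicator_apply, Set.mem_ofPred_eq, Pi.one_apply,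
      Walk.support_cons, List.mem_cons] at hEw ⊢
    grind

/-- Only the pair leaving `x` is lost: an intermediate vertex with an odd number of pebbles gains
one, which completes a pair for the next step. -/
lemma exists_reflTransGen_of_isPath_of_odd {x r : V} {p : G.Walk x r} (hp : p.IsPath)
    {C : V → ℕ} (hx : 2 ≤ C x) (hodd : ∀ v ∈ p.support, v ≠ x → v ≠ r → Odd (C v))
    {S : Finset V} (hxS : x ∈ S) (hrS : r ∉ S) :
    ∃ D, Relation.ReflTransGen (PebStep G) C D ∧ D r = C r + 1 ∧
      (∀ v ∉ p.support, D v = C v) ∧ ∑ v ∈ S, D v / 2 + 1 = ∑ v ∈ S, C v / 2 := by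
  classical
  have hxr : x ≠ r := ne_of_mem_of_not_mem hxS hrS
  obtain ⟨D, hCD, hD⟩ := exists_reflTransGen_of_isPath hp (C := C) (fun _ ↦ hx)
    (fun v hv hvr ↦ by grind)
  have hDv (v) : D v + (if v = x then 1 else 0) + (if v ∈ p.support then 1 else 0) =
      C v + if v = r then 2 else 0 := by
    simpa [Pi.single_apply, Set.indicator_apply] using congrFun hD v
  have hpair : ∀ v ∈ S, D v / 2 + (if v = x then 1 else 0) = C v / 2 := by
    intro v hv
    grind [Walk.start_mem_support]
  refine ⟨D, hCD, by grind [Walk.end_mem_support],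
    fun v hv ↦ by grind [Walk.start_mem_support, Walk.end_mem_support], ?_⟩
  rw [← Finset.sum_congr rfl hpair, Finset.sum_add_distrib, Finset.sum_ite_eq', if_pos hxS]

end Moves

section Solvability

lemma sum_eq_two_mul_sum_half_add_card_odd {ι : Type*} (C : ι → ℕ) (S : Finset ι) :
    ∑ v ∈ S, C v = 2 * ∑ v ∈ S, C v / 2 + (S.filter fun v ↦ Odd (C v)).card := by
  rw [Finset.mul_sum, Finset.card_filter, ← Finset.sum_add_distrib]
  exact Finset.sum_congr rfl fun v _ ↦ by grind

variable {V : Type} {G : SimpleGraph V} {C D : V → ℕ} {r : V} {t : ℕ} {S : Finset V}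

lemma TSolvable.of_reflTransGen (hD : TSolvable G D r t)
    (hCD : Relation.ReflTransGen (PebStep G) C D) : TSolvable G C r t :=
  let ⟨E, hDE, hE⟩ := hD
  ⟨E, hCD.trans hDE, hE⟩

lemma tSolvable_of_le_add_sum_half (hS : ∀ v ∈ S, G.Adj v r) (h : t ≤ C r + ∑ v ∈ S, C v / 2) :
    TSolvable G C r t :=
  let ⟨D, hCD, hDr, _⟩ := exists_reflTransGen_gather hS C
  ⟨D, hCD, hDr ▸ h⟩

lemma tSolvable_of_le_add_sum_half_via {c : V} (hcr : G.Adj c r) (hS : ∀ v ∈ S, G.Adj v c)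
    (hrS : r ∉ S) (h : 2 * t ≤ 2 * C r + C c + ∑ v ∈ S, C v / 2) : TSolvable G C r t := by
  obtain ⟨D, hCD, hDc, hD⟩ := exists_reflTransGen_gather hS C
  have hDr : D r = C r := hD r hrS hcr.ne'
  refine .of_reflTransGen (tSolvable_of_le_add_sum_half (S := {c}) (by simpa) ?_) hCD
  rw [Finset.sum_singleton]
  lia

variable [Fintype V]

theorem tSolvable_of_isUniversal_root (hr : G.IsUniversal r)
    (hC : 2 * t + Fintype.card V ≤ ∑ v, C v + 2) : TSolvable G C r t := by
  classical
  refine tSolvable_of_le_add_sum_half (S := {r}ᶜ) (fun v hv ↦ (hr ?_).symm) ?_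
  · simpa [eq_comm] using hv
  have hsum := Finset.sum_add_sum_compl {r} C
  have hcompl := sum_eq_two_mul_sum_half_add_card_odd C {r}ᶜ
  have hodd := Finset.card_filter_le ({r}ᶜ : Finset V) fun v ↦ Odd (C v)
  have hcard := Finset.card_add_card_compl {r}
  rw [Finset.sum_singleton] at hsum
  rw [Finset.card_singleton] at hcard
  lia

theorem tSolvable_of_isUniversal {c : V} (hc : G.IsUniversal c)
    (hconn : (G.induce {c}ᶜ).Preconnected) (ht : t ≠ 0)
    (hC : 4 * t + Fintype.card V ≤ ∑ v, C v + 4) : TSolvable G C r t := by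
  classical
  obtain rfl | hcr := eq_or_ne c r
  · exact tSolvable_of_isUniversal_root hc (by lia)
  let S : Finset V := {c, r}ᶜ
  have hmem (v) : v ∈ S ↔ v ≠ c ∧ v ≠ r := by simp [S]
  have hrS : r ∉ S := fun h ↦ ((hmem r).1 h).2 rfl
  have hS : ∀ v ∈ S, G.Adj v c := fun v hv ↦ (hc (by grind)).symm
  by_cases hpairs : 2 * t ≤ 2 * C r + C c + ∑ v ∈ S, C v / 2
  · exact tSolvable_of_le_add_sum_half_via (hc hcr) hS hrS hpairs
  have hsum : C c + C r + ∑ v ∈ S, C v = ∑ v, C v := by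
    rw [← Finset.sum_pair hcr, Finset.sum_add_sum_compl]
  have hcard : 2 + S.card = Fintype.card V := by
    rw [← Finset.card_pair hcr, Finset.card_add_card_compl]
  have hhalf := sum_eq_two_mul_sum_half_add_card_odd C S
  have hodd_le := Finset.card_filter_le S fun v ↦ Odd (C v)
  have hodd : ∀ v ∈ S, Odd (C v) := Finset.card_filter_eq_iff.1 (by lia)
  obtain ⟨x, hxS, hx⟩ : ∃ x ∈ S, C x / 2 ≠ 0 :=
    Finset.exists_ne_zero_of_sum_ne_zero (by lia)
  obtain ⟨p, hp, hcp⟩ := exists_isPath_notMem_support hconn (x := x) (y := r) (by grind) hcr.symm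
  obtain ⟨D, hCD, hDr, hD, hDS⟩ := exists_reflTransGen_of_isPath_of_odd hp (by lia)
    (fun v hv _ hvr ↦ hodd v ((hmem v).2 ⟨ne_of_mem_of_not_mem hv hcp, hvr⟩)) hxS hrS
  refine .of_reflTransGen (tSolvable_of_le_add_sum_half_via (hc hcr) hS hrS ?_) hCD
  have hDc : D c = C c := hD c hcp
  lia

end Solvability

section LowerBound

lemma sum_le_sum_of_reflTransGen {V : Type} [Fintype V] {G : SimpleGraph V} (φ : V → ℕ → ℕ)
    (hφ : ∀ u v, G.Adj u v → ∀ a b, φ u a + φ v (b + 1) ≤ φ u (a + 2) + φ v b) {C D : V → ℕ}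
    (hCD : Relation.ReflTransGen (PebStep G) C D) : ∑ v, φ v (D v) ≤ ∑ v, φ v (C v) := by
  classical
  induction hCD with
  | refl => rfl
  | @tail D E _ hDE ih =>
    obtain ⟨u, v, huv, -, hu, hv, hw⟩ := hDE
    have hcompl : ∑ w ∈ ({u, v}ᶜ : Finset V), φ w (E w) = ∑ w ∈ {u, v}ᶜ, φ w (D w) :=
      Finset.sum_congr rfl fun w hw' ↦ by
        rw [hw w (by grind [Finset.mem_compl]) (by grind [Finset.mem_compl])]
    calc ∑ w, φ w (E w)
      _ = φ u (E u) + φ v (D v + 1) + ∑ w ∈ {u, v}ᶜ, φ w (D w) := by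
        rw [← Finset.sum_add_sum_compl {u, v}, Finset.sum_pair huv.ne, hv, hcompl]
      _ ≤ φ u (E u + 2) + φ v (D v) + ∑ w ∈ {u, v}ᶜ, φ w (D w) := by grw [hφ u v huv]
      _ = ∑ w, φ w (D w) := by
        rw [hu, ← Finset.sum_pair (f := fun w ↦ φ w (D w)) huv.ne, Finset.sum_add_sum_compl]
      _ ≤ _ := ih

/-- The potential of `a` pebbles on `v` for the root `r`. A pebble at distance `i < d` from `r`
weighs `2 ^ (d - i)`; farther away only pairs count, so that a single pebble weighs nothing. No
pebbling step increases the total potential, whence `t` pebbles on `r` require `t * 2 ^ d`. -/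
noncomputable def distPotential {V : Type*} (G : SimpleGraph V) (r : V) (d : ℕ) (v : V)
    (a : ℕ) : ℕ :=
  if d ≤ G.dist r v then 2 * (a / 2) else 2 ^ (d - G.dist r v) * a

lemma distPotential_add_le {V : Type*} {G : SimpleGraph V} {u v : V} (huv : G.Adj u v)
    (r : V) (d a b : ℕ) :
    distPotential G r d u a + distPotential G r d v (b + 1) ≤
      distPotential G r d u (a + 2) + distPotential G r d v b := by
  have hdist : G.dist r u ≤ G.dist r v + 1 ∧ G.dist r v ≤ G.dist r u + 1 := by
    grind [huv.diff_dist_adj (u := r), huv.symm.diff_dist_adj (u := r)]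
  unfold distPotential
  split_ifs with hu hv hv
  · lia
  · rw [show d - G.dist r v = 1 by lia]
    lia
  · have := Nat.one_le_two_pow (n := d - G.dist r u)
    lia
  · have hpow : 2 ^ (d - G.dist r v) ≤ 2 ^ (d - G.dist r u) * 2 := by
      rw [← pow_succ]
      exact Nat.pow_le_pow_right two_pos (by lia)
    lia

theorem exists_not_tSolvable_of_le_dist {V : Type} [Fintype V] {G : SimpleGraph V} {r w : V}
    {d t : ℕ} (hd : d ≠ 0) (ht : t ≠ 0) (hw : d ≤ G.dist r w) :
    ∃ C : V → ℕ, t * 2 ^ d + {v | d ≤ G.dist r v}.ncard = ∑ v, C v + 2 ∧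
      ¬ TSolvable G C r t := by
  classical
  obtain ⟨m, hm⟩ : ∃ m, t * 2 ^ d = 2 * (m + 1) := by
    obtain ⟨e, rfl⟩ := Nat.exists_eq_succ_of_ne_zero hd
    have hpos : 0 < t * 2 ^ e := by positivity
    exact ⟨t * 2 ^ e - 1, by rw [pow_succ]; lia⟩
  let C : V → ℕ := fun v ↦ (if v = w then 2 * m else 0) + if d ≤ G.dist r v then 1 else 0
  refine ⟨C, ?_, ?_⟩
  · rw [Finset.sum_add_distrib, Finset.sum_ite_eq', if_pos (Finset.mem_univ w), Finset.sum_boole,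
      Set.ncard_eq_toFinset_card', Set.toFinset_ofPred, hm, Nat.cast_id]
    ring
  · rintro ⟨D, hCD, hD⟩
    have hpotC (v) : distPotential G r d v (C v) = if v = w then 2 * m else 0 := by
      simp only [distPotential, C]
      grind
    have hpotD : distPotential G r d r (D r) = 2 ^ d * D r := by simp [distPotential, hd]
    have hle := calc t * 2 ^ d
      _ ≤ distPotential G r d r (D r) := by rw [hpotD, mul_comm]; gcongr
      _ ≤ ∑ v, distPotential G r d v (D v) :=
        Finset.single_le_sum (f := fun v ↦ distPotential G r d v (D v)) (by simp)
          (Finset.mem_univ r)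
      _ ≤ ∑ v, distPotential G r d v (C v) :=
        sum_le_sum_of_reflTransGen _ (fun u v huv ↦ distPotential_add_le huv r d) hCD
      _ = 2 * m := by simp [hpotC]
    lia

end LowerBound

section PebblingNumber

variable {V : Type} [Fintype V] {G : SimpleGraph V} {t N : ℕ}

lemma piGt_eq_of_forall_of_exists
    (hle : ∀ r (C : V → ℕ), N ≤ ∑ v, C v → TSolvable G C r t)
    (hge : ∃ r, ∃ C : V → ℕ, N ≤ ∑ v, C v + 1 ∧ ¬ TSolvable G C r t) : piGt G t = N := by
  obtain ⟨r, C, hC, hnot⟩ := hge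
  have : Nonempty V := ⟨r⟩
  have hmem (r) : N ∈ {s | ∀ C : V → ℕ, s ≤ ∑ᶠ v, C v → TSolvable G C r t} := fun C hC ↦
    hle r C (by rwa [finsum_eq_sum_of_fintype] at hC)
  refine le_antisymm (ciSup_le fun r ↦ Nat.sInf_le (hmem r)) ?_
  calc N
    _ ≤ piT G r t := le_csInf ⟨N, hmem r⟩ fun s hs ↦ by
      by_contra! hlt
      exact hnot (hs C (by rw [finsum_eq_sum_of_fintype]; lia))
    _ ≤ piGt G t := le_ciSup (f := fun r ↦ piT G r t) (Set.finite_range _).bddAbove r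

theorem piGt_top [Nontrivial V] (ht : t ≠ 0) :
    piGt (⊤ : SimpleGraph V) t = 2 * t + Fintype.card V - 2 := by
  obtain ⟨r, w, hrw⟩ := exists_pair_ne V
  have hfar : {v | 1 ≤ (⊤ : SimpleGraph V).dist r v} = {r}ᶜ := by
    ext v
    simp [Nat.one_le_iff_ne_zero, connected_top.dist_eq_zero_iff, eq_comm (a := v)]
  have hcard := Set.ncard_add_ncard_compl {r}
  rw [Set.ncard_singleton, Nat.card_eq_fintype_card] at hcard
  refine piGt_eq_of_forall_of_exists (fun r C hC ↦ ?_) ?_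
  · exact tSolvable_of_isUniversal_root .top (by lia)
  · obtain ⟨C, hC, hnot⟩ := exists_not_tSolvable_of_le_dist (d := 1) one_ne_zero ht
      (dist_top_of_ne hrw).ge
    rw [hfar] at hC
    exact ⟨r, C, by lia, hnot⟩

theorem piGt_of_isUniversal_of_not_isUniversal {c r : V} (hc : G.IsUniversal c)
    (hconn : (G.induce {c}ᶜ).Preconnected) (hr : ¬ G.IsUniversal r)
    (hdeg : (G.neighborSet r).ncard = 2) (ht : t ≠ 0) :
    piGt G t = 4 * t + Fintype.card V - 4 := by
  have hG : G.Connected := .of_isUniversal hc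
  have hfar : {v | 2 ≤ G.dist r v} = (insert r (G.neighborSet r))ᶜ := by
    ext v
    simp [two_le_dist_iff hG, eq_comm (a := v)]
  have hcard := Set.ncard_add_ncard_compl (insert r (G.neighborSet r))
  rw [Set.ncard_insert_of_notMem G.notMem_neighborSet_self, hdeg,
    Nat.card_eq_fintype_card] at hcard
  refine piGt_eq_of_forall_of_exists (fun r C hC ↦ ?_) ?_
  · exact tSolvable_of_isUniversal hc hconn ht (by lia)
  · obtain ⟨w, hw⟩ := exists_two_le_dist hG hr
    obtain ⟨C, hC, hnot⟩ := exists_not_tSolvable_of_le_dist two_ne_zero ht hw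
    rw [hfar] at hC
    exact ⟨r, C, by lia, hnot⟩

end PebblingNumber

section Diameter

variable {V : Type} {G : SimpleGraph V} {c r : V}

lemma diamG_le [Nonempty V] {d : ℕ} (h : ∀ u v, G.dist u v ≤ d) : diamG G ≤ d :=
  ciSup_le fun u ↦ ciSup_le (h u)

variable [Finite V]

lemma dist_le_diamG (u v : V) : G.dist u v ≤ diamG G :=
  (le_ciSup (f := fun v ↦ G.dist u v) (Set.finite_range _).bddAbove v).trans
    (le_ciSup (f := fun u ↦ eccG G u) (Set.finite_range _).bddAbove u)

lemma diamG_top [Nontrivial V] : diamG (⊤ : SimpleGraph V) = 1 := by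
  obtain ⟨u, v, huv⟩ := exists_pair_ne V
  exact le_antisymm (diamG_le fun u ↦ dist_le_one_of_isUniversal .top)
    (dist_top_of_ne huv ▸ dist_le_diamG u v)

lemma diamG_of_isUniversal (hc : G.IsUniversal c) (hr : ¬ G.IsUniversal r) : diamG G = 2 := by
  have : Nonempty V := ⟨c⟩
  have hG : G.Connected := .of_isUniversal hc
  obtain ⟨w, hw⟩ := exists_two_le_dist hG hr
  refine le_antisymm (diamG_le fun u v ↦ ?_) (hw.trans (dist_le_diamG r w))
  calc G.dist u v
    _ ≤ G.dist c u + G.dist c v := dist_comm (G := G) (u := u) ▸ hG.dist_triangle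
    _ ≤ 2 := add_le_add (dist_le_one_of_isUniversal hc u) (dist_le_one_of_isUniversal hc v)

end Diameter

section Simplicial

variable {V : Type} {G : SimpleGraph V}

lemma IsSimplicial.of_induce {v : V} {s : {u // u ≠ v}}
    (hs : IsSimplicial (G.induce {u | u ≠ v}) s) (hsv : ¬ G.Adj s v) : IsSimplicial G s := by
  intro a ha b hb hab
  have hav : a ≠ v := ne_of_mem_of_not_mem ha hsv
  have hbv : b ≠ v := ne_of_mem_of_not_mem hb hsv
  exact hs (x := ⟨a, hav⟩) ha (y := ⟨b, hbv⟩) hb (by simpa using hab)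

lemma IsSimplicial.isClique_insert {v : V} (hv : IsSimplicial G v) :
    G.IsClique (insert v (G.neighborSet v)) :=
  IsClique.insert hv fun _ hb _ ↦ hb

lemma IsSimplicial.eq_top_of_isUniversal {v : V} (hv : IsSimplicial G v)
    (huniv : G.IsUniversal v) : G = ⊤ := by
  rw [← isClique_univ, ← insert_neighborSet_eq_univ.2 huniv]
  exact hv.isClique_insert

end Simplicial

section TwoTree

variable {V : Type} {G : SimpleGraph V}

lemma IsTwoTree.nontrivial (hG : IsTwoTree G) : Nontrivial V := by
  induction hG with
  | base _ e _ => exact e.nontrivial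
  | extend _ _ _ _ _ ih =>
    obtain ⟨a, b, hab⟩ := ih
    exact ⟨a, b, Subtype.val_injective.ne hab⟩

theorem IsTwoTree.exists_isSimplicial_notMem_of_isClique (hG : IsTwoTree G) {K : Set V}
    (hK : G.IsClique K) (hne : K ≠ Set.univ) : ∃ s ∉ K, IsSimplicial G s := by
  induction hG with
  | base G _ h =>
    obtain ⟨s, hs⟩ := (Set.ne_univ_iff_exists_notMem K).1 hne
    exact ⟨s, hs, fun a _ b _ hab ↦ (h a b).2 hab⟩
  | extend G v hdeg hcl h ih =>
    by_cases hvK : v ∈ K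
    swap
    · exact ⟨v, hvK, hcl⟩
    have hKv : K ⊆ insert v (G.neighborSet v) := fun u hu ↦
      (eq_or_ne u v).imp_right fun huv ↦ hK hvK hu huv.symm
    by_cases huniv : G.IsUniversal v
    · obtain rfl := IsSimplicial.eq_top_of_isUniversal hcl huniv
      obtain ⟨s, hs⟩ := (Set.ne_univ_iff_exists_notMem K).1 hne
      exact ⟨s, hs, fun a _ b _ hab ↦ hab⟩
    · obtain ⟨s, hsv, hs⟩ := ih (K := Subtype.val ⁻¹' G.neighborSet v)
        (fun a ha b hb hab ↦ hcl ha hb (by simpa [Subtype.ext_iff] using hab)) fun huniv' ↦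
          huniv fun w hvw ↦ huniv'.ge (Set.mem_univ ⟨w, hvw.symm⟩)
      refine ⟨s, fun hsK ↦ ?_, hs.of_induce fun hsv' ↦ hsv hsv'.symm⟩
      exact (hKv hsK).elim s.2 hsv

theorem IsTwoTree.isUniversal_of_forall_isSimplicial (hG : IsTwoTree G) {c : V}
    (hc : ∀ s, IsSimplicial G s → s ≠ c → G.Adj c s) : G.IsUniversal c := by
  induction hG with
  | base G _ h => exact fun w hw ↦ (h c w).2 hw
  | extend G v hdeg hcl h ih =>
    obtain rfl | hcv := eq_or_ne c v
    · rw [← insert_neighborSet_eq_univ]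
      by_contra hne
      obtain ⟨s, hs, hsimp⟩ := IsTwoTree.exists_isSimplicial_notMem_of_isClique
        (.extend G c hdeg hcl h) (IsSimplicial.isClique_insert hcl) hne
      exact hs (or_iff_not_imp_left.2 (hc s hsimp))
    · have hcv' : G.Adj c v := hc v hcl hcv.symm
      have hc' := ih (c := ⟨c, hcv⟩) fun s hs hsc ↦ by
        have hsc' : c ≠ s.1 := by simpa [Subtype.ext_iff, eq_comm] using hsc
        by_cases hsv : G.Adj s v
        · exact hcl hcv'.symm hsv.symm hsc'
        · exact hc s (hs.of_induce hsv) hsc'.symm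
      intro w hcw
      obtain rfl | hwv := eq_or_ne w v
      · exact hcv'
      · exact hc' (w := ⟨w, hwv⟩) (by simpa [Subtype.ext_iff] using hcw)

theorem IsTwoTree.preconnected_induce_compl (hG : IsTwoTree G) {S : Set V} (hS : S.Subsingleton) :
    (G.induce Sᶜ).Preconnected := by
  induction hG with
  | base G _ h =>
    intro x y
    obtain rfl | hxy := eq_or_ne x y
    · exact .refl _
    · exact Adj.reachable ((h x y).2 (by simpa [Subtype.ext_iff] using hxy))
  | @extend V G v hdeg hcl h ih =>
    obtain ⟨a, hva, haS⟩ : ∃ a ∈ G.neighborSet v, a ∉ S := by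
      refine Set.not_subset.1 fun hsub ↦ ?_
      obtain ⟨p, q, hpq, hN⟩ := Set.ncard_eq_two.1 hdeg
      exact hpq (hS (hsub (by simp [hN])) (hsub (by simp [hN])))
    have hreach (x : (Sᶜ : Set V)) : (G.induce Sᶜ).Reachable ⟨a, haS⟩ x := by
      obtain ⟨x, hxS⟩ := x
      obtain rfl | hxv := eq_or_ne x v
      · exact Adj.reachable (G.adj_symm hva)
      · let f : (G.induce {u | u ≠ v}).induce (Subtype.val ⁻¹' S)ᶜ →g G.induce Sᶜ :=
          ⟨fun u ↦ ⟨u, u.2⟩, id⟩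
        exact (ih (hS.preimage Subtype.val_injective) ⟨⟨a, hva.ne'⟩, haS⟩ ⟨⟨x, hxv⟩, hxS⟩).map f
    exact fun x y ↦ (hreach x).symm.trans (hreach y)

lemma IsTwoTree.preconnected (hG : IsTwoTree G) : G.Preconnected := fun x y ↦
  (hG.preconnected_induce_compl Set.subsingleton_empty ⟨x, id⟩ ⟨y, id⟩).map
    (Embedding.induce _).toHom

lemma IsTwoTree.exists_isSimplicial_ncard_neighborSet (hG : IsTwoTree G) (hne : G ≠ ⊤) :
    ∃ r, IsSimplicial G r ∧ (G.neighborSet r).ncard = 2 := by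
  cases hG with
  | base _ _ h => exact absurd (by ext a b; simp [h]) hne
  | extend _ r hdeg hcl _ => exact ⟨r, hcl, hdeg⟩

theorem IsTwoTree.piGt_of_isUniversal [Fintype V] (hG : IsTwoTree G) {c : V}
    (hc : G.IsUniversal c) {t : ℕ} (ht : t ≠ 0) :
    piGt G t = t * 2 ^ diamG G + Fintype.card V - 2 * diamG G := by
  obtain rfl | htop := eq_or_ne G ⊤
  · have := hG.nontrivial
    rw [piGt_top ht, diamG_top]
    lia
  · obtain ⟨r, hr, hdeg⟩ := hG.exists_isSimplicial_ncard_neighborSet htop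
    have hr' : ¬ G.IsUniversal r := fun h ↦ htop (hr.eq_top_of_isUniversal h)
    have hconn := hG.preconnected_induce_compl (Set.subsingleton_singleton (a := c))
    rw [piGt_of_isUniversal_of_not_isUniversal hc hconn hr' hdeg ht, diamG_of_isUniversal hc hr']
    lia

theorem IsTwoPath.exists_isUniversal [Finite V] (hG : IsTwoPath G) (hd : diamG G ≤ 2) :
    ∃ c, G.IsUniversal c := by
  obtain ⟨hG, hcard⟩ := hG
  obtain ⟨s, s', hss', hsimp⟩ := Set.ncard_eq_two.1 hcard
  have hmem {u} (hu : IsSimplicial G u) : u = s ∨ u = s' := hsimp.le hu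
  by_cases hadj : G.Adj s s'
  · exact ⟨s, hG.isUniversal_of_forall_isSimplicial fun u hu hus ↦
      (hmem hu).resolve_left hus ▸ hadj⟩
  · have hreach : G.Reachable s s' := hG.preconnected s s'
    have hdist : G.dist s s' = 2 := le_antisymm ((dist_le_diamG s s').trans hd)
      (hreach.one_lt_dist_of_ne_of_not_adj hss' hadj)
    obtain ⟨p, hp⟩ := hreach.exists_walk_length_eq_dist
    obtain ⟨c, hsc, hcs'⟩ : ∃ c, G.Adj s c ∧ G.Adj c s' := by
      match p, hp.trans hdist with
      | .cons hsc (.cons hcs' .nil), _ => exact ⟨_, hsc, hcs'⟩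
    exact ⟨c, hG.isUniversal_of_forall_isSimplicial fun u hu _ ↦
      (hmem hu).elim (· ▸ hsc.symm) (· ▸ hcs')⟩

end TwoTree

/-- a 2-path on `n` vertices with diameter `d ≤ 2` has
`π_t(G) = t·2^d + n − 2d`. -/
theorem twoPath_small_diameter_pebbling {V : Type} [Fintype V] (G : SimpleGraph V)
    (hG : IsTwoPath G) (n d t : ℕ) (hn : Fintype.card V = n)
    (hd : d = diamG G) (hd2 : d ≤ 2) (ht : 1 ≤ t) :
    piGt G t = t * 2 ^ d + n - 2 * d := by
  subst hn hd
  obtain ⟨c, hc⟩ := hG.exists_isUniversal hd2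
  exact hG.1.piGt_of_isUniversal hc (Nat.one_le_iff_ne_zero.1 ht)
end

section
/- Let G be a 2-path on n vertices, r a simplicial vertex of G, and d = ecc(r). Then every configuration of size at least 2^d + n − 2d is r-solvable; consequently π_t(G,r) = t·2^d + n − 2d for all t ≥ 1. -/
open SimpleGraph

/-!
Removing the simplicial vertices other than `r` one after the other shows that a 2-path consists of
layers around `r`, each of them a fan which is attached to only two vertices of the previous layer.
The vertices of the `i`-th layer have distance `i` from `r`.

Upper bound: two distinguished vertices of a layer form a gate. If a configuration is not solvable,
then gathering the pebbles of a fan at its center must waste a pebble on each vertex of the fan. In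
this extremal case the wasted pebbles can be used to move a pebble along the fan to the second gate
vertex. Hence by induction each layer saves two pebbles compared to the number of vertices.

Lower bound: put `t * 2 ^ d - 1` pebbles on a vertex at distance `d` and one pebble on every vertex
outside a set `Z` that contains `r`, this vertex and the two gate vertices of each other layer. A
vertex outside `Z` has no neighbor farther from `r`, so a single pebble on it can be given weight
`0` in a potential that pebbling steps do not increase.
-/

/-- From the configuration `C` pebbling steps lead to a configuration with at least as many pebbles
as `D` on every vertex. In contrast to reachability itself, this relation is monotone in both
arguments and compatible with addition of configurations. -/
def Reaches {V : Type} (G : SimpleGraph V) (C D : V → ℕ) : Prop :=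
  ∃ C', Relation.ReflTransGen (PebStep G) C C' ∧ D ≤ C'

section Reaches

variable {V : Type} {G : SimpleGraph V} {C C' D D' E : V → ℕ}

theorem PebStep.add_right (h : PebStep G C D) (E : V → ℕ) : PebStep G (C + E) (D + E) := by
  obtain ⟨u, v, huv, htwo, hu, hv, hw⟩ := h
  refine ⟨u, v, huv, ?_, ?_, ?_, fun w hwu hwv => ?_⟩ <;> simp only [Pi.add_apply]
  · omega
  · omega
  · omega
  · rw [hw w hwu hwv]

theorem Reaches.of_le (h : D ≤ C) : Reaches G C D :=
  ⟨C, .refl, h⟩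

theorem Reaches.add_right (h : Reaches G C D) (E : V → ℕ) : Reaches G (C + E) (D + E) := by
  obtain ⟨C', hC, hD⟩ := h
  exact ⟨C' + E, hC.lift (· + E) fun _ _ hstep => hstep.add_right E, add_le_add_left hD E⟩

theorem Reaches.add_left (h : Reaches G C D) (E : V → ℕ) : Reaches G (E + C) (E + D) := by
  simpa only [add_comm E] using h.add_right E

theorem Reaches.trans (hCD : Reaches G C D) (hDE : Reaches G D E) : Reaches G C E := by
  obtain ⟨C', hC, hD⟩ := hCD
  obtain ⟨D', hD', hE⟩ := hDE.add_right (C' - D)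
  rw [add_tsub_cancel_of_le hD] at hD'
  exact ⟨D', hC.trans hD', le_self_add.trans hE⟩

theorem Reaches.of_le_trans (h : D ≤ C) (hDE : Reaches G D E) : Reaches G C E :=
  (Reaches.of_le h).trans hDE

theorem Reaches.add (h : Reaches G C D) (h' : Reaches G C' D') : Reaches G (C + C') (D + D') :=
  (h.add_right C').trans (h'.add_left D)

variable [DecidableEq V] {u v z r : V} {t : ℕ} {L : Finset V}

theorem single_le_iff : (Pi.single r t : V → ℕ) ≤ C ↔ t ≤ C r := by
  refine ⟨fun h => by simpa using h r, fun h w => ?_⟩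
  obtain rfl | hw := eq_or_ne w r
  · simpa using h
  · simp [hw]

theorem reaches_single_iff : Reaches G C (Pi.single r t) ↔ TSolvable G C r t := by
  simp only [Reaches, TSolvable, single_le_iff]

theorem reaches_single_of_adj (huv : G.Adj u v) (k : ℕ) :
    Reaches G (Pi.single u (2 * k)) (Pi.single v k) := by
  have step : Reaches G (Pi.single u 2) (Pi.single v 1) := by
    refine ⟨Pi.single v 1, .single ⟨u, v, huv, ?_, ?_, ?_, fun w hwu hwv => ?_⟩, le_rfl⟩
    · simp
    · simp [huv.ne]
    · simp [huv.ne']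
    · simp [hwu, hwv]
  induction k with
  | zero => exact .of_le (by simp)
  | succ k ih =>
    rw [mul_add, mul_one, Pi.single_add, Pi.single_add]
    exact ih.add step

theorem indicator_insert_of_notMem {c : V} (hc : c ∉ L) (f : V → ℕ) :
    Set.indicator (insert c L : Finset V) f = Pi.single c (f c) + Set.indicator L f := by
  ext v
  by_cases hv : v = c
  · subst hv
    simp [hc]
  · simp [Set.indicator_apply, hv]

theorem reaches_single_sum (hL : ∀ c ∈ L, G.Adj c z) (f : V → ℕ) :
    Reaches G (Set.indicator L (2 * f)) (Pi.single z (∑ c ∈ L, f c)) := by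
  induction L using Finset.induction_on with
  | empty => exact .of_le (by simp)
  | insert c L hc ih =>
    rw [Finset.forall_mem_insert] at hL
    rw [indicator_insert_of_notMem hc, Finset.sum_insert hc, Pi.single_add]
    exact (reaches_single_of_adj hL.1 _).add (ih hL.2)

theorem sum_indicator_add_single {T : Finset V} (hz : z ∈ T) (C : V → ℕ) (m : ℕ) :
    ∑ v ∈ T, (Set.indicator T C + Pi.single z m : V → ℕ) v = ∑ v ∈ T, C v + m := by
  simp only [Pi.add_apply, Finset.sum_add_distrib, Finset.sum_pi_single', hz, if_true]
  congr 1
  exact Finset.sum_congr rfl fun v hv => Set.indicator_of_mem hv C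

end Reaches

section Fan

variable {V : Type} {G : SimpleGraph V} {S T L : Finset V} {z z' a b c v : V}

/-- The vertex `v` is outside `S` and has precisely the neighbors `a` and `b` in `S`. The case
`a = b` is allowed. -/
structure Attached (G : SimpleGraph V) (S : Finset V) (v a b : V) : Prop where
  notMem : v ∉ S
  left_mem : a ∈ S
  right_mem : b ∈ S
  adj_left : G.Adj v a
  adj_right : G.Adj v b
  eq_or_eq : ∀ u ∈ S, G.Adj v u → u = a ∨ u = b

theorem Attached.symm (h : Attached G S v a b) : Attached G S v b a :=
  ⟨h.notMem, h.right_mem, h.left_mem, h.adj_right, h.adj_left,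
    fun u hu hvu => (h.eq_or_eq u hu hvu).symm⟩

variable [DecidableEq V]

/-- A fan with center `z` attached to `T`: a path with vertex set `L` and first vertex `c`, all of
whose vertices are adjacent to `z`, while only the last one is also adjacent to `z'`. The path is
built up from its last vertex. -/
inductive Fan (G : SimpleGraph V) (T : Finset V) (z z' : V) : V → Finset V → Prop
  | single {c : V} (h : Attached G T c z z') : Fan G T z z' c {c}
  | cons {c e : V} {L : Finset V} (hf : Fan G T z z' e L) (h : Attached G (T ∪ L) c z e) :
      Fan G T z z' c (insert c L)

namespace Fan

theorem first_mem (h : Fan G T z z' c L) : c ∈ L := by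
  cases h <;> simp

theorem center_mem (h : Fan G T z z' c L) : z ∈ T := by
  induction h with
  | single h => exact h.left_mem
  | cons _ _ ih => exact ih

theorem disjoint (h : Fan G T z z' c L) : Disjoint T L := by
  induction h with
  | single h => exact Finset.disjoint_singleton_right.2 h.notMem
  | cons _ h ih =>
    exact Finset.disjoint_insert_right.2 ⟨fun hc => h.notMem (Finset.mem_union_left _ hc), ih⟩

theorem adj_center (h : Fan G T z z' c L) : ∀ x ∈ L, G.Adj x z := by
  induction h with
  | single h => simpa using h.adj_left
  | cons _ h ih => exact Finset.forall_mem_insert _ _ _ |>.2 ⟨h.adj_left, ih⟩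

theorem eq_or_eq_of_adj (h : Fan G T z z' c L) :
    ∀ x ∈ L, ∀ u ∈ T, G.Adj x u → u = z ∨ u = z' := by
  induction h with
  | single h => simpa using h.eq_or_eq
  | @cons c e L hf h ih =>
    refine Finset.forall_mem_insert _ _ _ |>.2 ⟨fun u hu hcu => ?_, ih⟩
    rcases h.eq_or_eq u (Finset.mem_union_left _ hu) hcu with rfl | rfl
    · exact .inl rfl
    · exact absurd hf.first_mem (Finset.disjoint_left.1 hf.disjoint hu)

/-- The extra pebble at `x` and the pebble already there become one pebble on the next vertex of
the path, and so on towards `z'`. -/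
theorem reaches_single_right (h : Fan G T z z' c L) {x : V} (hx : x ∈ L) :
    Reaches G (Pi.single x 1 + Set.indicator L 1) (Pi.single z' 1) := by
  induction h generalizing x with
  | @single c h =>
    obtain rfl := Finset.mem_singleton.1 hx
    refine .of_le_trans (fun w => ?_) (reaches_single_of_adj h.adj_right 1)
    by_cases hw : w = x <;> simp [hw]
  | @cons c e L hf h ih =>
    have hcL : c ∉ L := fun hc => h.notMem (Finset.mem_union_right _ hc)
    rw [indicator_insert_of_notMem hcL]
    rcases Finset.mem_insert.1 hx with rfl | hxL
    · rw [← add_assoc, Pi.one_apply, ← Pi.single_add]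
      exact ((reaches_single_of_adj h.adj_right 1).add_right _).trans (ih hf.first_mem)
    · exact .of_le_trans (add_le_add_right le_add_self _) (ih hxL)

theorem reaches_of_odd (h : Fan G T z z' c L) {f : V → ℕ} {m : ℕ}
    (hf : ∑ x ∈ L, f x = m + 1) :
    Reaches G (Set.indicator L (2 * f + 1)) (Pi.single z m + Pi.single z' 1) := by
  obtain ⟨x, hx, hfx⟩ : ∃ x ∈ L, f x ≠ 0 := by
    by_contra! h0
    rw [Finset.sum_eq_zero h0] at hf
    omega
  obtain ⟨g, rfl⟩ : ∃ g, f = g + Pi.single x 1 :=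
    ⟨f - Pi.single x 1,
      (tsub_add_cancel_of_le (single_le_iff.2 (Nat.one_le_iff_ne_zero.2 hfx))).symm⟩
  have hg : ∑ y ∈ L, g y = m := by
    simpa [Finset.sum_add_distrib, hx] using hf
  have hsplit : Set.indicator L (2 * g) + (Pi.single x 1 + Set.indicator L 1) ≤
      Set.indicator L (2 * (g + Pi.single x 1) + 1) := by
    intro w
    by_cases hw : w = x
    · subst hw
      simp only [Pi.add_apply, Set.indicator_of_mem, Finset.mem_coe, hx, Pi.mul_apply,
        Pi.ofNat_apply, Pi.single_eq_same]
      omega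
    · by_cases hwL : w ∈ L <;> simp [hw, hwL]
  rw [← hg]
  exact .of_le_trans hsplit ((reaches_single_sum h.adj_center g).add (h.reaches_single_right hx))

end Fan

end Fan

section Gate

variable {V : Type} {G : SimpleGraph V} {R C : V → ℕ} {T L : Finset V} {k x : ℕ}

theorem sum_eq_two_mul_sum_half_add (L : Finset V) (C : V → ℕ) :
    ∑ v ∈ L, C v = 2 * ∑ v ∈ L, (C / 2) v + ∑ v ∈ L, C v % 2 := by
  rw [Finset.mul_sum, ← Finset.sum_add_distrib]
  exact Finset.sum_congr rfl fun v _ => (Nat.div_add_mod _ 2).symm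

theorem indicator_add_indicator_le (h : Disjoint T L) {D D' : V → ℕ} (hT : ∀ v ∈ T, D v ≤ C v)
    (hL : ∀ v ∈ L, D' v ≤ C v) : Set.indicator T D + Set.indicator L D' ≤ C := by
  intro v
  by_cases hvT : v ∈ T
  · simpa [hvT, Finset.disjoint_left.1 h hvT] using hT v hvT
  · by_cases hvL : v ∈ L
    · simpa [hvT, hvL] using hL v hvL
    · simp [hvT, hvL]

theorem sum_indicator_self (T : Finset V) (C : V → ℕ) :
    ∑ v ∈ T, Set.indicator T C v = ∑ v ∈ T, C v :=
  Finset.sum_congr rfl fun _ hv => Set.indicator_of_mem hv C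

variable [DecidableEq V] {a b c r z z' : V}

theorem Fan.reaches_half_sum (hf : Fan G T z z' c L) (C : V → ℕ) :
    Reaches G C (Set.indicator T C + Pi.single z (∑ v ∈ L, (C / 2) v)) :=
  .of_le_trans (indicator_add_indicator_le hf.disjoint (fun _ _ => le_rfl)
    fun v _ => Nat.mul_div_le (C v) 2) ((reaches_single_sum hf.adj_center (C / 2)).add_left _)

theorem Fan.reaches_of_forall_odd (hf : Fan G T z z' c L) {m : ℕ}
    (hodd : ∀ v ∈ L, C v % 2 = 1) (hsum : ∑ v ∈ L, (C / 2) v = m + 1) :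
    Reaches G C (Set.indicator T C + (Pi.single z m + Pi.single z' 1)) := by
  refine .of_le_trans (indicator_add_indicator_le hf.disjoint (fun _ _ => le_rfl)
    (D' := 2 * (C / 2) + 1) fun v hv => ?_) ((hf.reaches_of_odd hsum).add_left _)
  have hv_odd := hodd v hv
  simp only [Pi.add_apply, Pi.mul_apply, Pi.ofNat_apply, Pi.div_apply]
  omega

theorem Fan.reaches_add_single (hf : Fan G T z z' c L) (ha : a ∈ L) (C : V → ℕ) (x : ℕ) :
    Reaches G (C + Pi.single a (2 * x)) (Set.indicator T C + Pi.single z x) :=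
  .of_le_trans (add_le_add_left (Set.indicator_le_self _ C) _)
    ((reaches_single_of_adj (hf.adj_center a ha) x).add_left _)

theorem Fan.reaches_add_single_add_single (hf : Fan G T z z' c L) (ha : a ∈ L) {y : ℕ}
    (hC : ∀ v ∈ L, (C + (Pi.single a 1 + Pi.single b 1) : V → ℕ) v = 1) :
    Reaches G (C + (Pi.single a (2 * (y + 1)) + Pi.single b 1))
      (Set.indicator T C + (Pi.single z y + Pi.single z' 1)) := by
  have hle : Set.indicator T C + Set.indicator L 1 ≤ C + (Pi.single a 1 + Pi.single b 1) :=
    indicator_add_indicator_le hf.disjoint (fun _ _ => le_self_add) fun v hv => (hC v hv).ge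
  refine .of_le_trans (D := Set.indicator T C + (Pi.single a (2 * y) +
    (Pi.single a 1 + Set.indicator L 1))) ?_ <|
    ((reaches_single_of_adj (hf.adj_center a ha) y).add (hf.reaches_single_right ha)).add_left _
  calc _ = (Set.indicator T C + Set.indicator L 1) + Pi.single a (2 * y + 1) := by
        rw [Pi.single_add]; abel
    _ ≤ C + (Pi.single a 1 + Pi.single b 1) + Pi.single a (2 * y + 1) := add_le_add_left hle _
    _ = C + (Pi.single a (2 * (y + 1)) + Pi.single b 1) := by
        rw [show 2 * (y + 1) = 1 + (2 * y + 1) by omega, Pi.single_add a 1]; abel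

/-- Invariant of the induction over the fans for the goal configuration `R`: seen from outside, the
vertex set `T` can only be entered through `a` and `b`, and `k` measures how many pebbles may be
missing on `T`. The parameter `x` is the largest number of pebbles on `a` that need not suffice. -/
structure IsGate (G : SimpleGraph V) (R : V → ℕ) (T : Finset V) (k x : ℕ) (a b : V) : Prop where
  reaches : Reaches G (Pi.single a (x + 1)) R
  reaches_of_le_sum : ∀ C : V → ℕ, T.card + x + 1 ≤ ∑ v ∈ T, C v + k → Reaches G C R
  reaches_or_reaches : ∀ C : V → ℕ, T.card ≤ ∑ v ∈ T, C v + k →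
    Reaches G (C + Pi.single a x) R ∨
      ∃ y, x = y + 1 ∧ Reaches G (C + (Pi.single a y + Pi.single b 1)) R

namespace IsGate

theorem root (r : V) (x : ℕ) : IsGate G (Pi.single r (x + 1)) {r} 0 x r r where
  reaches := .of_le le_rfl
  reaches_of_le_sum C hC := .of_le <| single_le_iff.2 <| by
    rw [Finset.card_singleton, Finset.sum_singleton] at hC
    omega
  reaches_or_reaches C hC := .inl <| .of_le <| single_le_iff.2 <| by
    rw [Finset.card_singleton, Finset.sum_singleton] at hC
    rw [Pi.add_apply, Pi.single_eq_same]
    omega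

/-- If emptying the fan pairwise towards its center does not give enough pebbles, then by the parity
count every vertex of the fan carries an odd number of pebbles, so that the pebble needed on the
second gate vertex can be moved along the fan. -/
theorem reaches_of_fan (hg : IsGate G R T k x z z') (hf : Fan G T z z' c L)
    (hC : T.card + L.card + 2 * (x + 1) ≤ ∑ v ∈ T, C v + ∑ v ∈ L, C v + (k + 2)) :
    Reaches G C R := by
  have hgather := hf.reaches_half_sum C
  set u := ∑ v ∈ L, (C / 2) v with hu
  have hsum := sum_eq_two_mul_sum_half_add L C
  have hmod : ∑ v ∈ L, C v % 2 ≤ ∑ v ∈ L, 1 := Finset.sum_le_sum fun v _ => by omega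
  rw [← Finset.card_eq_sum_ones] at hmod
  rcases Nat.lt_or_ge x u with hxu | hux
  · exact (hgather.trans (.of_le (le_add_self.trans' (Pi.single_mono z hxu)))).trans hg.reaches
  rcases Nat.lt_or_ge (T.card + x) (∑ v ∈ T, C v + u + k) with hlarge | hsmall
  · refine hgather.trans (hg.reaches_of_le_sum _ ?_)
    rw [sum_indicator_add_single hf.center_mem]
    omega
  have hodd : ∀ v ∈ L, C v % 2 = 1 := by
    refine (Finset.sum_eq_sum_iff_of_le fun v _ => by omega).1 ?_
    rw [← Finset.card_eq_sum_ones]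
    omega
  have hux : u = x := by omega
  rcases hg.reaches_or_reaches (Set.indicator T C) (by rw [sum_indicator_self]; omega) with
    h | ⟨y, hxy, h⟩
  · exact hgather.trans (hux ▸ h)
  · exact (hf.reaches_of_forall_odd hodd (hu.symm.trans (hux.trans hxy))).trans h

theorem reaches_add_single_two (hg : IsGate G R T k x z z') (ha : G.Adj a z) (hc : G.Adj c z) :
    Reaches G (Pi.single a (2 * x) + Pi.single c 2) R := by
  have h := (reaches_single_of_adj ha x).add (reaches_single_of_adj hc 1)
  rw [← Pi.single_add] at h
  exact h.trans hg.reaches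

theorem reaches_or_reaches_of_two_le {e : V} (hg : IsGate G R T k x z z') (hf : Fan G T z z' c L)
    (ha : a ∈ L) (hab : a ≠ b) (he : e ∈ L)
    (hC : 2 ≤ (C + (Pi.single a 1 + Pi.single b 1) : V → ℕ) e) :
    Reaches G (C + Pi.single a (2 * x + 1)) R ∨
      Reaches G (C + (Pi.single a (2 * x) + Pi.single b 1)) R := by
  have htwo := hg.reaches_add_single_two (hf.adj_center a ha) (hf.adj_center e he)
  obtain rfl | hea := eq_or_ne e a
  · rw [← Pi.single_add] at htwo
    refine .inl (.of_le_trans (single_le_iff.2 ?_) htwo)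
    simp only [Pi.add_apply, Pi.single_eq_same, Pi.single_eq_of_ne hab] at hC ⊢
    omega
  · refine .inr (.of_le_trans ?_ htwo)
    rw [add_left_comm]
    refine add_le_add_right (single_le_iff.2 ?_) _
    simpa [hea] using hC

/-- Put one pebble on each of `a` and `b`. Two pebbles on some vertex of the fan suffice; otherwise
the fan carries at most one pebble on every vertex, and in the extremal case exactly one. -/
theorem fan_reaches_or_reaches (hg : IsGate G R T k x z z') (hf : Fan G T z z' c L) (ha : a ∈ L)
    (hb : b ∈ L) (hab : a ≠ b)
    (hC : T.card + L.card ≤ ∑ v ∈ T, C v + ∑ v ∈ L, C v + (k + 2)) :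
    Reaches G (C + Pi.single a (2 * x + 1)) R ∨
      Reaches G (C + (Pi.single a (2 * x) + Pi.single b 1)) R := by
  set D : V → ℕ := C + (Pi.single a 1 + Pi.single b 1) with hD
  by_cases htwo : ∃ e ∈ L, 2 ≤ D e
  · obtain ⟨e, he, hDe⟩ := htwo
    exact hg.reaches_or_reaches_of_two_le hf ha hab he hDe
  have hD_le : ∀ v ∈ L, D v ≤ 1 := by
    push Not at htwo
    exact fun v hv => Nat.lt_succ_iff.1 (htwo v hv)
  have hD_sum : ∑ v ∈ L, D v = ∑ v ∈ L, C v + 2 := by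
    simp [hD, Finset.sum_add_distrib, ha, hb]
  have hD_card : ∑ v ∈ L, D v ≤ L.card := Finset.card_eq_sum_ones L ▸ Finset.sum_le_sum hD_le
  have hgather : Reaches G (C + Pi.single a (2 * x + 1)) (Set.indicator T C + Pi.single z x) :=
    .of_le_trans (add_le_add_right (Pi.single_mono a (Nat.le_succ _)) C)
      (hf.reaches_add_single ha C x)
  rcases Nat.lt_or_ge T.card (∑ v ∈ T, C v + k) with hlarge | hsmall
  · refine .inl <| hgather.trans (hg.reaches_of_le_sum _ ?_)
    rw [sum_indicator_add_single hf.center_mem]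
    omega
  have hD_one : ∀ v ∈ L, D v = 1 := by
    refine (Finset.sum_eq_sum_iff_of_le hD_le).1 ?_
    rw [← Finset.card_eq_sum_ones]
    omega
  rcases hg.reaches_or_reaches (Set.indicator T C) (by rw [sum_indicator_self]; omega) with
    h | ⟨y, rfl, h⟩
  · exact .inl (hgather.trans h)
  · exact .inr ((hf.reaches_add_single_add_single ha hD_one).trans h)

theorem fan (hg : IsGate G R T k x z z') (hf : Fan G T z z' c L) (ha : a ∈ L) (hb : b ∈ L)
    (hab : a ≠ b) : IsGate G R (T ∪ L) (k + 2) (2 * x + 1) a b where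
  reaches := (reaches_single_of_adj (hf.adj_center a ha) (x + 1)).trans hg.reaches
  reaches_of_le_sum C hC := by
    rw [Finset.card_union_of_disjoint hf.disjoint, Finset.sum_union hf.disjoint] at hC
    exact hg.reaches_of_fan hf (by omega)
  reaches_or_reaches C hC := by
    rw [Finset.card_union_of_disjoint hf.disjoint, Finset.sum_union hf.disjoint] at hC
    exact (hg.fan_reaches_or_reaches hf ha hb hab hC).imp_right fun h => ⟨2 * x, rfl, h⟩

end IsGate

/-- `T` is the union of `i` layers around the root `r`: the first one is `{r}`, every other one is a
fan attached to the previous ones. The next layer can only be attached to the two distinguished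
vertices of the last layer. -/
inductive Layered (G : SimpleGraph V) (r : V) : ℕ → Finset V → V → V → Prop
  | root : Layered G r 0 {r} r r
  | next {i : ℕ} {T L : Finset V} {z z' a b c : V} (h : Layered G r i T z z')
      (hf : Fan G T z z' c L) (ha : a ∈ L) (hb : b ∈ L) (hab : a ≠ b) :
      Layered G r (i + 1) (T ∪ L) a b

namespace Layered

variable {i t : ℕ}

theorem symm (h : Layered G r i T a b) : Layered G r i T b a := by
  cases h with
  | root => exact .root
  | next h hf ha hb hab => exact .next h hf hb ha hab.symm

theorem isGate (h : Layered G r i T a b) (ht : 1 ≤ t) :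
    IsGate G (Pi.single r t) T (2 * i) (t * 2 ^ i - 1) a b := by
  induction h with
  | root =>
    obtain ⟨x, rfl⟩ := Nat.exists_eq_add_of_le' ht
    simpa using IsGate.root r x
  | @next i T L z z' a b c _ hf ha hb hab ih =>
    have hpos : 1 ≤ t * 2 ^ i := Nat.mul_pos ht (Nat.two_pow_pos i)
    have hx : t * 2 ^ (i + 1) - 1 = 2 * (t * 2 ^ i - 1) + 1 := by rw [pow_succ, ← mul_assoc]; omega
    rw [hx]
    exact ih.fan hf ha hb hab

theorem tSolvable_of_fan [Fintype V] (h : Layered G r i T z z') (hf : Fan G T z z' c L)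
    (hV : T ∪ L = Finset.univ) (ht : 1 ≤ t)
    (hC : t * 2 ^ (i + 1) + Fintype.card V ≤ ∑ v, C v + 2 * (i + 1)) : TSolvable G C r t := by
  have hpos : 1 ≤ t * 2 ^ i := Nat.mul_pos ht (Nat.two_pow_pos i)
  have hpow : t * 2 ^ (i + 1) = 2 * (t * 2 ^ i) := by rw [pow_succ]; ring
  rw [← Finset.card_univ, ← hV, Finset.card_union_of_disjoint hf.disjoint,
    Finset.sum_union hf.disjoint] at hC
  exact reaches_single_iff.1 ((h.isGate ht).reaches_of_fan hf (by omega))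

end Layered

end Gate

section Weight

variable {V : Type} [DecidableEq V] {G : SimpleGraph V} {r s u v : V} {Z : Finset V}
  {C C' : V → ℕ} {d t : ℕ}

/-- Contribution of a vertex `v` carrying `c` pebbles to a potential that no pebbling step
increases. Outside `Z` the first pebble contributes nothing and every further one counts double. -/
noncomputable def weight (G : SimpleGraph V) (r : V) (Z : Finset V) (d : ℕ) (v : V) (c : ℕ) : ℕ :=
  if v ∈ Z then 2 ^ (d - G.dist r v) * c else 2 ^ (d - G.dist r v + 1) * (c - 1)

theorem weight_add_two (v : V) (c : ℕ) :
    weight G r Z d v c + 2 ^ (d - G.dist r v + 1) ≤ weight G r Z d v (c + 2) := by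
  unfold weight
  split_ifs
  · rw [mul_add, pow_succ]
  · rw [← Nat.mul_succ]
    exact Nat.mul_le_mul_left _ (by omega)

theorem weight_add_one (hZ : v ∉ Z → ∀ u, G.Adj v u → G.dist r u ≤ G.dist r v)
    (huv : G.Adj u v) (c : ℕ) :
    weight G r Z d v (c + 1) ≤ weight G r Z d v c + 2 ^ (d - G.dist r u + 1) := by
  unfold weight
  split_ifs with hv
  · have hdist := huv.symm.diff_dist_adj (u := r)
    rw [mul_add, mul_one]
    exact add_le_add_right (Nat.pow_le_pow_right two_pos (by omega)) _
  · have hdist := hZ hv u huv.symm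
    calc _ ≤ 2 ^ (d - G.dist r v + 1) * (c - 1 + 1) := Nat.mul_le_mul_left _ (by omega)
      _ ≤ _ := by
        rw [mul_add, mul_one]
        exact add_le_add_right (Nat.pow_le_pow_right two_pos (by omega)) _

variable [Fintype V]

theorem sum_weight_le_of_pebStep (hZ : ∀ v ∉ Z, ∀ u, G.Adj v u → G.dist r u ≤ G.dist r v)
    (hC : PebStep G C C') :
    ∑ v, weight G r Z d v (C' v) ≤ ∑ v, weight G r Z d v (C v) := by
  obtain ⟨u, v, huv, -, hu, hv, hw⟩ := hC
  have hvu : v ∈ Finset.univ.erase u := Finset.mem_erase.2 ⟨huv.ne', Finset.mem_univ v⟩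
  have hrest : ∑ w ∈ (Finset.univ.erase u).erase v, weight G r Z d w (C' w) =
      ∑ w ∈ (Finset.univ.erase u).erase v, weight G r Z d w (C w) :=
    Finset.sum_congr rfl fun w hmem => by
      rw [hw w (Finset.ne_of_mem_erase (Finset.mem_of_mem_erase hmem))
        (Finset.ne_of_mem_erase hmem)]
  simp only [← Finset.add_sum_erase _ _ (Finset.mem_univ u), ← Finset.add_sum_erase _ _ hvu]
  rw [hrest, ← hu, hv]
  have hleave := weight_add_two (G := G) (r := r) (Z := Z) (d := d) u (C' u)
  have henter := weight_add_one (r := r) (d := d) (hZ v) huv (C v)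
  omega

theorem le_sum_weight_of_tSolvable (hr : r ∈ Z)
    (hZ : ∀ v ∉ Z, ∀ u, G.Adj v u → G.dist r u ≤ G.dist r v) (h : TSolvable G C r t) :
    t * 2 ^ d ≤ ∑ v, weight G r Z d v (C v) := by
  obtain ⟨C', hsteps, ht⟩ := h
  have hmono : ∑ v, weight G r Z d v (C' v) ≤ ∑ v, weight G r Z d v (C v) := by
    clear ht
    induction hsteps with
    | refl => exact le_rfl
    | tail _ hstep ih => exact (sum_weight_le_of_pebStep hZ hstep).trans ih
  calc t * 2 ^ d ≤ C' r * 2 ^ d := Nat.mul_le_mul_right _ ht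
    _ = weight G r Z d r (C' r) := by simp [weight, hr, mul_comm]
    _ ≤ ∑ v, weight G r Z d v (C' v) :=
      Finset.single_le_sum (f := fun v => weight G r Z d v (C' v)) (fun _ _ => Nat.zero_le _)
        (Finset.mem_univ r)
    _ ≤ _ := hmono

omit [DecidableEq V] in
theorem exists_not_tSolvable_of_dist_le (hr : r ∈ Z) (hs : s ∈ Z)
    (hZ : ∀ v ∉ Z, ∀ u, G.Adj v u → G.dist r u ≤ G.dist r v) (ht : 1 ≤ t) :
    ∃ C : V → ℕ, ∑ v, C v + Z.card + 1 = t * 2 ^ G.dist r s + Fintype.card V ∧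
      ¬ TSolvable G C r t := by
  classical
  have hpos : 1 ≤ t * 2 ^ G.dist r s := Nat.mul_pos ht (Nat.two_pow_pos _)
  set m := t * 2 ^ G.dist r s - 1 with hm
  refine ⟨Pi.single s m + Set.indicator (Zᶜ : Finset V) 1, ?_, fun h => ?_⟩
  · have hone : ∑ v, Set.indicator (Zᶜ : Finset V) (1 : V → ℕ) v = Zᶜ.card :=
      (Finset.sum_indicator_subset (1 : V → ℕ) (Finset.subset_univ Zᶜ)).trans
        (Finset.card_eq_sum_ones _).symm
    simp only [Pi.add_apply, Finset.sum_add_distrib, Finset.sum_pi_single', Finset.mem_univ,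
      if_true]
    rw [hone, ← Finset.card_add_card_compl Z]
    omega
  · have hweight : ∀ v, weight G r Z (G.dist r s) v
        ((Pi.single s m + Set.indicator (Zᶜ : Finset V) 1 : V → ℕ) v) =
        (Pi.single s m : V → ℕ) v := by
      intro v
      obtain rfl | hv := eq_or_ne v s
      · simp [weight, hs]
      · by_cases hvZ : v ∈ Z <;> simp [weight, hv, hvZ]
    have hle := le_sum_weight_of_tSolvable (d := G.dist r s) hr hZ h
    simp only [hweight, Finset.sum_pi_single', Finset.mem_univ, if_true] at hle
    omega

end Weight

section Level

variable {V : Type} {G : SimpleGraph V} {r : V} {T Z : Finset V} {lev : V → ℕ} {d : ℕ}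

/-- On `T` the function `lev` is a distance from `r` with values at most `d`, characterized without
walks; `Z` contains all the vertices of `T` with a neighbor of higher level in `T`. -/
structure IsLevelOn (G : SimpleGraph V) (r : V) (T Z : Finset V) (lev : V → ℕ) (d : ℕ) : Prop where
  root_mem : r ∈ T
  root_eq : lev r = 0
  le : ∀ v ∈ T, lev v ≤ d
  le_succ : ∀ u ∈ T, ∀ v ∈ T, G.Adj u v → lev v ≤ lev u + 1
  exists_adj : ∀ v ∈ T, v ≠ r → ∃ u ∈ T, G.Adj u v ∧ lev v = lev u + 1
  mem_of_lt : ∀ u ∈ T, ∀ v ∈ T, G.Adj u v → lev u < lev v → u ∈ Z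

namespace IsLevelOn

theorem mono {Z' : Finset V} (h : IsLevelOn G r T Z lev d) (hZ : Z ⊆ Z') :
    IsLevelOn G r T Z' lev d :=
  { h with mem_of_lt := fun u hu v hv huv hlt => hZ (h.mem_of_lt u hu v hv huv hlt) }

theorem extend [DecidableEq V] {z z' c : V} {L : Finset V} (h : IsLevelOn G r T Z lev d)
    (hf : Fan G T z z' c L) (hz : z ∈ Z) (hz' : z' ∈ Z) (hlz : lev z = d) (hlz' : lev z' = d) :
    IsLevelOn G r (T ∪ L) Z (fun v => if v ∈ T then lev v else d + 1) (d + 1) where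
  root_mem := Finset.mem_union_left _ h.root_mem
  root_eq := by rw [if_pos h.root_mem, h.root_eq]
  le v _ := by
    split_ifs with hv
    · exact (h.le v hv).trans d.le_succ
    · exact le_rfl
  le_succ u _ v hv huv := by
    split_ifs with hvT huT huT
    · exact h.le_succ u huT v hvT huv
    · have := h.le v hvT
      omega
    · have hvL := (Finset.mem_union.1 hv).resolve_left hvT
      rcases hf.eq_or_eq_of_adj v hvL u huT huv.symm with rfl | rfl <;> omega
    · omega
  exists_adj v hv hvr := by
    by_cases hvT : v ∈ T
    · obtain ⟨u, hu, huv, hlev⟩ := h.exists_adj v hvT hvr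
      exact ⟨u, Finset.mem_union_left _ hu, huv, by simpa [hvT, hu] using hlev⟩
    · have hvL := (Finset.mem_union.1 hv).resolve_left hvT
      exact ⟨z, Finset.mem_union_left _ hf.center_mem, (hf.adj_center v hvL).symm,
        by simp [hvT, hf.center_mem, hlz]⟩
  mem_of_lt u _ v hv huv hlt := by
    split_ifs at hlt with huT hvT hvT
    · exact h.mem_of_lt u huT v hvT huv hlt
    · have hvL := (Finset.mem_union.1 hv).resolve_left hvT
      rcases hf.eq_or_eq_of_adj v hvL u huT huv.symm with rfl | rfl <;> assumption
    · have := h.le v hvT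
      omega
    · omega

variable [Fintype V]

theorem exists_walk_length_eq (h : IsLevelOn G r .univ Z lev d) (v : V) :
    ∃ p : G.Walk r v, p.length = lev v := by
  induction hk : lev v generalizing v with
  | zero =>
    by_cases hvr : v = r
    · exact ⟨.copy .nil rfl hvr.symm, by simp⟩
    · obtain ⟨u, -, -, hu⟩ := h.exists_adj v (Finset.mem_univ v) hvr
      omega
  | succ k ih =>
    have hvr : v ≠ r := fun hvr => by simp [hvr, h.root_eq] at hk
    obtain ⟨u, -, huv, hu⟩ := h.exists_adj v (Finset.mem_univ v) hvr
    obtain ⟨p, hp⟩ := ih u (by omega)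
    exact ⟨p.concat huv, by rw [Walk.length_concat, hp]⟩

theorem le_length (h : IsLevelOn G r .univ Z lev d) {u v : V} (p : G.Walk u v) :
    lev v ≤ lev u + p.length := by
  induction p with
  | nil => simp
  | cons huv p ih =>
    have := h.le_succ _ (Finset.mem_univ _) _ (Finset.mem_univ _) huv
    rw [Walk.length_cons]
    omega

theorem dist_eq (h : IsLevelOn G r .univ Z lev d) (v : V) : G.dist r v = lev v := by
  obtain ⟨p, hp⟩ := h.exists_walk_length_eq v
  obtain ⟨q, hq⟩ := p.reachable.exists_walk_length_eq_dist
  refine le_antisymm (hp ▸ dist_le p) ?_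
  simpa [h.root_eq, hq] using h.le_length q

theorem eccG_eq (h : IsLevelOn G r .univ Z lev d) {s : V} (hs : lev s = d) : eccG G r = d := by
  have : Nonempty V := ⟨r⟩
  simp only [eccG, h.dist_eq]
  exact le_antisymm (ciSup_le fun v => h.le v (Finset.mem_univ v))
    (hs ▸ le_ciSup (Set.finite_range lev).bddAbove s)

end IsLevelOn

namespace Layered

variable [DecidableEq V] {a b s z z' : V} {L : Finset V} {i t : ℕ}

theorem exists_isLevelOn (h : Layered G r i T a b) :
    ∃ Z lev, IsLevelOn G r T Z lev i ∧ r ∈ Z ∧ a ∈ Z ∧ b ∈ Z ∧ lev a = i ∧ lev b = i ∧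
      Z.card ≤ 2 * i + 1 := by
  induction h with
  | root =>
    refine ⟨{r}, 0, ⟨by simp, rfl, by simp, by simp, ?_, by simp⟩, by simp⟩
    exact fun v hv hvr => absurd (Finset.mem_singleton.1 hv) hvr
  | @next i T L z z' a b c _ hf ha hb _ ih =>
    obtain ⟨Z, lev, h, hr, hz, hz', hlz, hlz', hcard⟩ := ih
    have hT : ∀ v ∈ L, v ∉ T := fun _ hv => Finset.disjoint_right.1 hf.disjoint hv
    refine ⟨insert a (insert b Z), _, (h.extend hf hz hz' hlz hlz').mono ?_, by simp [hr],
      by simp, by simp, if_neg (hT a ha), if_neg (hT b hb), ?_⟩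
    · exact (Finset.subset_insert b Z).trans (Finset.subset_insert a _)
    · have ha_card := Finset.card_insert_le a (insert b Z)
      have hb_card := Finset.card_insert_le b Z
      omega

theorem exists_isLevelOn_of_fan (h : Layered G r i T z z') (hf : Fan G T z z' s L) :
    ∃ Z lev, IsLevelOn G r (T ∪ L) Z lev (i + 1) ∧ r ∈ Z ∧ s ∈ Z ∧ lev s = i + 1 ∧
      Z.card ≤ 2 * (i + 1) := by
  obtain ⟨Z, lev, h, hr, hz, hz', hlz, hlz', hcard⟩ := h.exists_isLevelOn
  exact ⟨insert s Z, _, (h.extend hf hz hz' hlz hlz').mono (Finset.subset_insert s Z),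
    Finset.mem_insert_of_mem hr, Finset.mem_insert_self s Z,
    if_neg (Finset.disjoint_right.1 hf.disjoint hf.first_mem),
    (Finset.card_insert_le s Z).trans (by omega)⟩

variable [Fintype V]

theorem eccG_eq (h : Layered G r i T z z') (hf : Fan G T z z' s L) (hV : T ∪ L = Finset.univ) :
    eccG G r = i + 1 := by
  obtain ⟨Z, lev, hlev, -, -, hs, -⟩ := h.exists_isLevelOn_of_fan hf
  exact (hV ▸ hlev).eccG_eq hs

theorem exists_not_tSolvable (h : Layered G r i T z z') (hf : Fan G T z z' s L)
    (hV : T ∪ L = Finset.univ) (ht : 1 ≤ t) :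
    ∃ C : V → ℕ, t * 2 ^ (i + 1) + Fintype.card V ≤ ∑ v, C v + 2 * (i + 1) + 1 ∧
      ¬ TSolvable G C r t := by
  obtain ⟨Z, lev, hlev, hr, hsZ, hs, hcard⟩ := h.exists_isLevelOn_of_fan hf
  rw [hV] at hlev
  have hZ : ∀ v ∉ Z, ∀ u, G.Adj v u → G.dist r u ≤ G.dist r v := by
    intro v hv u hvu
    rw [hlev.dist_eq, hlev.dist_eq]
    by_contra! hlt
    exact hv (hlev.mem_of_lt v (Finset.mem_univ v) u (Finset.mem_univ u) hvu hlt)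
  obtain ⟨C, hC, hnot⟩ := exists_not_tSolvable_of_dist_le hr hsZ hZ ht
  rw [hlev.dist_eq, hs] at hC
  exact ⟨C, by omega, hnot⟩

theorem piT_eq (h : Layered G r i T z z') (hf : Fan G T z z' s L) (hV : T ∪ L = Finset.univ)
    (ht : 1 ≤ t) : piT G r t = t * 2 ^ (i + 1) + Fintype.card V - 2 * (i + 1) := by
  have hmem : t * 2 ^ (i + 1) + Fintype.card V - 2 * (i + 1) ∈
      {m | ∀ C : V → ℕ, m ≤ ∑ᶠ v, C v → TSolvable G C r t} := fun C hC => by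
    rw [finsum_eq_sum_of_fintype] at hC
    exact h.tSolvable_of_fan hf hV ht (by omega)
  refine le_antisymm (Nat.sInf_le hmem) (le_csInf ⟨_, hmem⟩ fun m hm => ?_)
  by_contra! hlt
  obtain ⟨C, hC, hnot⟩ := h.exists_not_tSolvable hf hV ht
  refine hnot (hm C ?_)
  rw [finsum_eq_sum_of_fintype]
  omega

end Layered

end Level

section TwoTree

variable {V : Type} {G : SimpleGraph V} {S S' : Finset V} {r s u v w a b x y : V}

/-- The vertex `v` is a simplicial vertex of the subgraph induced by `S`. -/
def IsSimplicialOn (G : SimpleGraph V) (S : Finset V) (v : V) : Prop :=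
  v ∈ S ∧ G.IsClique (G.neighborSet v ∩ S)

theorem isSimplicialOn_univ_iff [Fintype V] : IsSimplicialOn G .univ v ↔ IsSimplicial G v := by
  simp [IsSimplicialOn, IsSimplicial]

theorem IsSimplicialOn.mono (h : IsSimplicialOn G S v) (hv : v ∈ S') (hS : S' ⊆ S) :
    IsSimplicialOn G S' v :=
  ⟨hv, h.2.subset (Set.inter_subset_inter_right _ (Finset.coe_subset.2 hS))⟩

variable [DecidableEq V]

theorem IsSimplicialOn.insert_of_not_adj (h : IsSimplicialOn G S v) (hw : ¬ G.Adj v w) :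
    IsSimplicialOn G (insert w S) v := by
  refine ⟨Finset.mem_insert_of_mem h.1, h.2.subset fun x hx => ?_⟩
  rcases Finset.mem_insert.1 hx.2 with rfl | hxS
  · exact absurd hx.1 hw
  · exact ⟨hx.1, hxS⟩

theorem isSimplicialOn_pair (u v : V) : IsSimplicialOn G {u, v} v := by
  refine ⟨by simp, (isClique_singleton u).subset fun x hx => ?_⟩
  rcases Finset.mem_insert.1 hx.2 with rfl | hxv
  · rfl
  · exact absurd hx.1 (Finset.mem_singleton.1 hxv ▸ G.irrefl)

theorem isSimplicialOn_triple (huw : G.Adj u w) : IsSimplicialOn G {u, v, w} v := by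
  refine ⟨by simp, (isClique_pair.2 fun _ => huw).subset fun x ⟨hvx, hx⟩ => ?_⟩
  rw [Finset.mem_coe, Finset.insert_comm] at hx
  simpa using Finset.mem_of_mem_insert_of_ne hx (G.ne_of_adj hvx).symm

namespace Attached

theorem isSimplicialOn_insert (h : Attached G S v a b) (hab : G.Adj a b) :
    IsSimplicialOn G (insert v S) v :=
  ⟨Finset.mem_insert_self v S, (isClique_pair.2 fun _ => hab).subset fun _ hx =>
    h.eq_or_eq _ (Finset.mem_of_mem_insert_of_ne hx.2 (G.ne_of_adj hx.1).symm) hx.1⟩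

theorem of_triangle (hab : G.Adj a b) (hwa : G.Adj w a) : Attached G {w, b} a w b where
  notMem := by simp [hwa.ne', hab.ne]
  left_mem := by simp
  right_mem := by simp
  adj_left := hwa.symm
  adj_right := hab
  eq_or_eq := by simp +contextual

theorem insert_of_not_adj (h : Attached G S v a b) (hwv : v ≠ w) (hadj : ¬ G.Adj v w) :
    Attached G (insert w S) v a b where
  notMem := by simp [hwv, h.notMem]
  left_mem := Finset.mem_insert_of_mem h.left_mem
  right_mem := Finset.mem_insert_of_mem h.right_mem
  adj_left := h.adj_left
  adj_right := h.adj_right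
  eq_or_eq u hu hvu :=
    h.eq_or_eq u (Finset.mem_of_mem_insert_of_ne hu fun huw => hadj (huw ▸ hvu)) hvu

theorem erase_of_not_adj (h : Attached G S v a b) (hadj : ¬ G.Adj v w) :
    Attached G (S.erase w) v a b where
  notMem hv := h.notMem (Finset.mem_of_mem_erase hv)
  left_mem := Finset.mem_erase.2 ⟨fun haw => hadj (haw ▸ h.adj_left), h.left_mem⟩
  right_mem := Finset.mem_erase.2 ⟨fun hbw => hadj (hbw ▸ h.adj_right), h.right_mem⟩
  adj_left := h.adj_left
  adj_right := h.adj_right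
  eq_or_eq u hu := h.eq_or_eq u (Finset.mem_of_mem_erase hu)

/-- Otherwise `w` would have the three distinct neighbors `v`, `x` and `y` in `S`. -/
theorem not_adj_of_isSimplicialOn (hw : Attached G S w a b) (hv : Attached G (S.erase v) v x y)
    (hxy : G.Adj x y) (hvS : v ∈ S) (hsimp : IsSimplicialOn G (insert w S) v) :
    ¬ G.Adj w v := by
  intro hwv
  have hw_adj : ∀ u ∈ S.erase v, G.Adj v u → u = a ∨ u = b := fun u hu hvu => by
    have huS := Finset.mem_of_mem_erase hu
    exact hw.eq_or_eq u huS <| hsimp.2 ⟨hwv.symm, Finset.mem_insert_self w S⟩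
      ⟨hvu, Finset.mem_insert_of_mem huS⟩ fun hwu => hw.notMem (hwu ▸ huS)
  have hx := hw_adj x hv.left_mem hv.adj_left
  have hy := hw_adj y hv.right_mem hv.adj_right
  have hv' := hw.eq_or_eq v hvS hwv
  have hxy_ne := hxy.ne
  have hvx_ne := hv.adj_left.ne
  have hvy_ne := hv.adj_right.ne
  grind

end Attached

/-- The subgraph induced by `S` is a 2-tree. In contrast to `IsTwoTree`, all the stages of the
construction are recorded as subsets of one vertex type. -/
inductive IsTwoTreeOn (G : SimpleGraph V) : Finset V → Prop
  | base {a b : V} (hab : G.Adj a b) : IsTwoTreeOn G {a, b}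
  | extend {S : Finset V} {v a b : V} (h : IsTwoTreeOn G S) (hv : Attached G S v a b)
      (hab : G.Adj a b) : IsTwoTreeOn G (insert v S)

namespace IsTwoTreeOn

theorem map {W : Type} [DecidableEq W] {H : SimpleGraph W} {S : Finset W} (f : H ↪g G)
    (h : IsTwoTreeOn H S) : IsTwoTreeOn G (S.map f.toEmbedding) := by
  induction h with
  | base hab =>
    rw [Finset.map_insert, Finset.map_singleton]
    exact .base (f.map_adj_iff.2 hab)
  | @extend S v a b _ hv hab ih =>
    rw [Finset.map_insert]
    refine ih.extend (a := f a) (b := f b) ⟨by simpa using hv.notMem,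
      Finset.mem_map_of_mem _ hv.left_mem, Finset.mem_map_of_mem _ hv.right_mem,
      f.map_adj_iff.2 hv.adj_left, f.map_adj_iff.2 hv.adj_right, fun u hu huv => ?_⟩
      (f.map_adj_iff.2 hab)
    obtain ⟨u, hu', rfl⟩ := Finset.mem_map.1 hu
    exact (hv.eq_or_eq u hu' (f.map_adj_iff.1 huv)).imp (congrArg f) (congrArg f)

theorem two_le_card (h : IsTwoTreeOn G S) : 2 ≤ S.card := by
  induction h with
  | base hab => rw [Finset.card_pair hab.ne]
  | extend _ _ _ ih => exact ih.trans (Finset.card_le_card (Finset.subset_insert _ _))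

theorem exists_adj (h : IsTwoTreeOn G S) : ∀ v ∈ S, ∃ u ∈ S, G.Adj v u := by
  induction h with
  | @base a b hab => simp [hab, hab.symm]
  | extend _ hv _ ih =>
    rw [Finset.forall_mem_insert]
    refine ⟨⟨_, Finset.mem_insert_of_mem hv.left_mem, hv.adj_left⟩, fun u hu => ?_⟩
    obtain ⟨x, hx, hux⟩ := ih u hu
    exact ⟨x, Finset.mem_insert_of_mem hx, hux⟩

theorem eq_pair (h : IsTwoTreeOn G S) (hS : S.card = 2) (hu : u ∈ S) (hv : v ∈ S)
    (huv : u ≠ v) : S = {u, v} ∧ G.Adj u v := by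
  have hpair : {u, v} = S := Finset.eq_of_subset_of_card_le
    (Finset.insert_subset hu (Finset.singleton_subset_iff.2 hv)) (by rw [hS, Finset.card_pair huv])
  refine ⟨hpair.symm, ?_⟩
  obtain ⟨w, hw, hadj⟩ := h.exists_adj u hu
  rw [← hpair] at hw
  rcases Finset.mem_insert.1 hw with rfl | hwv
  · exact absurd hadj G.irrefl
  · rwa [← Finset.mem_singleton.1 hwv]

theorem erase_triangle (hab : G.Adj a b) (hwa : G.Adj w a) (hwb : G.Adj w b) :
    IsTwoTreeOn G ((insert w {a, b} : Finset V).erase a) ∧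
      ∃ x y, G.Adj x y ∧ Attached G ((insert w {a, b} : Finset V).erase a) a x y := by
  have herase : (insert w {a, b} : Finset V).erase a = {w, b} := by
    rw [Finset.erase_insert_of_ne hwa.ne, Finset.erase_insert (by simpa using hab.ne)]
  rw [herase]
  exact ⟨.base hwb, w, b, hwb, .of_triangle hab hwa⟩

theorem erase (h : IsTwoTreeOn G S) (hS : 3 ≤ S.card) (hv : IsSimplicialOn G S v) :
    IsTwoTreeOn G (S.erase v) ∧ ∃ a b, G.Adj a b ∧ Attached G (S.erase v) v a b := by
  induction h with
  | base hab => rw [Finset.card_pair hab.ne] at hS; omega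
  | @extend S w a b h hw hab ih =>
    obtain rfl | hvw := eq_or_ne v w
    · rw [Finset.erase_insert hw.notMem]
      exact ⟨h, a, b, hab, hw⟩
    have hvS : v ∈ S := Finset.mem_of_mem_insert_of_ne hv.1 hvw
    rcases h.two_le_card.eq_or_lt' with hS2 | hS3
    · obtain ⟨rfl, -⟩ := h.eq_pair hS2 hw.left_mem hw.right_mem hab.ne
      rcases Finset.mem_insert.1 hvS with rfl | hvb
      · exact erase_triangle hab hw.adj_left hw.adj_right
      · obtain rfl := Finset.mem_singleton.1 hvb
        rw [Finset.pair_comm]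
        exact erase_triangle hab.symm hw.adj_right hw.adj_left
    · obtain ⟨herase, x, y, hxy, hvxy⟩ := ih hS3 (hv.mono hvS (Finset.subset_insert _ _))
      have hwv := hw.not_adj_of_isSimplicialOn hvxy hxy hvS hv
      rw [Finset.erase_insert_of_ne hvw.symm]
      exact ⟨herase.extend (hw.erase_of_not_adj hwv) hab, x, y, hxy,
        hvxy.insert_of_not_adj hvw fun hvw' => hwv hvw'.symm⟩

theorem eq_pair_or_exists_isSimplicialOn (h : IsTwoTreeOn G S) (hu : u ∈ S) (hv : v ∈ S)
    (huv : G.Adj u v) : S = {u, v} ∨ ∃ w, IsSimplicialOn G S w ∧ w ≠ u ∧ w ≠ v := by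
  induction h generalizing u v with
  | base hab =>
    exact .inl (eq_pair (.base hab) (Finset.card_pair hab.ne) hu hv huv.ne).1
  | @extend S w a b h hw hab ih =>
    right
    have exists_of_adj : ∀ x ∈ insert w S, G.Adj w x →
        ∃ y, IsSimplicialOn G (insert w S) y ∧ y ≠ w ∧ y ≠ x := by
      intro x hx hwx
      rcases ih hw.left_mem hw.right_mem hab with rfl | ⟨y, hy, hya, hyb⟩
      · rcases hw.eq_or_eq x (Finset.mem_of_mem_insert_of_ne hx hwx.ne') hwx with rfl | rfl
        · exact ⟨b, Finset.pair_comm x b ▸ isSimplicialOn_triple hwx, hw.adj_right.ne', hab.ne'⟩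
        · exact ⟨a, isSimplicialOn_triple hwx, hw.adj_left.ne', hab.ne⟩
      · have hyw : ¬ G.Adj y w := fun hyw => (hw.eq_or_eq y hy.1 hyw.symm).elim hya hyb
        exact ⟨y, hy.insert_of_not_adj hyw, fun hyw' => hw.notMem (hyw' ▸ hy.1),
          fun hyx => hyw (hyx ▸ hwx.symm)⟩
    by_cases huw : u = w
    · subst huw
      exact exists_of_adj v hv huv
    by_cases hvw : v = w
    · subst hvw
      obtain ⟨y, hy, hyv, hyu⟩ := exists_of_adj u hu huv.symm
      exact ⟨y, hy, hyu, hyv⟩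
    exact ⟨w, hw.isSimplicialOn_insert hab, Ne.symm huw, Ne.symm hvw⟩

theorem exists_isSimplicialOn_ne (h : IsTwoTreeOn G S) (hr : r ∈ S) :
    ∃ v, IsSimplicialOn G S v ∧ v ≠ r := by
  obtain ⟨u, hu, hru⟩ := h.exists_adj r hr
  rcases h.eq_pair_or_exists_isSimplicialOn hr hu hru with rfl | ⟨v, hv, hvr, -⟩
  · exact ⟨u, isSimplicialOn_pair r u, hru.ne'⟩
  · exact ⟨v, hv, hvr⟩

end IsTwoTreeOn

theorem IsTwoTree.isTwoTreeOn {V : Type} {G : SimpleGraph V} (h : IsTwoTree G) :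
    ∀ [DecidableEq V] (S : Finset V), (∀ v, v ∈ S) → IsTwoTreeOn G S := by
  induction h with
  | base G e h =>
    intro _ S hS
    have hpair : S = {e.symm 0, e.symm 1} := by
      ext v
      have hv : e v = 0 ∨ e v = 1 := by omega
      simpa [hS v, Equiv.eq_symm_apply] using hv
    rw [hpair]
    exact .base ((h _ _).2 (by simp))
  | extend G v hdeg hcl _ ih =>
    intro _ S hS
    obtain ⟨a, b, hab, hN⟩ := Set.ncard_eq_two.1 hdeg
    have hadj : ∀ u, G.Adj v u ↔ u = a ∨ u = b := Set.ext_iff.1 hN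
    have hva := (hadj a).2 (.inl rfl)
    have hvb := (hadj b).2 (.inr rfl)
    have herase : IsTwoTreeOn G (S.erase v) := by
      convert (ih (S.subtype (· ∈ {u | u ≠ v})) fun u => by simpa using hS u).map
        (SimpleGraph.Embedding.induce (G := G) {u | u ≠ v})
      ext u
      simp [hS u]
    rw [← Finset.insert_erase (hS v)]
    exact herase.extend ⟨Finset.notMem_erase v S, Finset.mem_erase.2 ⟨hva.ne', hS a⟩,
      Finset.mem_erase.2 ⟨hvb.ne', hS b⟩, hva, hvb, fun u _ => (hadj u).1⟩ (hcl hva hvb hab)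

/-- The new vertex prolongs the last fan if it is attached to the center of this fan; otherwise it
starts a new fan, and the first two vertices of the last fan become the gate. -/
theorem Layered.exists_of_attached {i : ℕ} {T L : Finset V} {z z' : V}
    (h : Layered G r i T z z') (hf : Fan G T z z' a L) (hs : Attached G (T ∪ L) s a b)
    (hab : G.Adj a b) :
    ∃ i T' z z' L', Layered G r i T' z z' ∧ Fan G T' z z' s L' ∧ T' ∪ L' = insert s (T ∪ L) := by
  have hbT : b ∈ T ∪ L := hs.right_mem
  cases hf with
  | single ha =>
    have hb : b ∈ T := by simpa [hab.ne'] using hbT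
    rcases ha.eq_or_eq b hb hab with rfl | rfl
    · exact ⟨i, T, b, z', _, h, (Fan.single ha).cons hs.symm, Finset.union_insert ..⟩
    · exact ⟨i, T, b, z, _, h.symm, (Fan.single ha.symm).cons hs.symm, Finset.union_insert ..⟩
  | @cons _ e L hf ha =>
    have hb : b ∈ T ∪ L := by
      rw [Finset.union_insert] at hbT
      exact Finset.mem_of_mem_insert_of_ne hbT hab.ne'
    rcases ha.eq_or_eq b hb hab with rfl | rfl
    · exact ⟨i, T, b, z', _, h, (hf.cons ha).cons hs.symm, Finset.union_insert ..⟩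
    · refine ⟨i + 1, T ∪ insert a L, a, b, {s}, h.next (hf.cons ha) ?_ ?_ hab.ne, .single hs, ?_⟩
      · exact Finset.mem_insert_self a L
      · exact Finset.mem_insert_of_mem hf.first_mem
      · rw [Finset.union_comm, ← Finset.insert_eq]

theorem IsTwoTreeOn.exists_layered (h : IsTwoTreeOn G S) (hr : r ∈ S) (hs : IsSimplicialOn G S s)
    (hsr : s ≠ r) (huniq : ∀ v, IsSimplicialOn G S v → v ≠ r → v = s ∨ G.Adj s v) :
    ∃ i T z z' L, Layered G r i T z z' ∧ Fan G T z z' s L ∧ T ∪ L = S := by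
  induction hn : S.card generalizing S s with
  | zero => simp [Finset.card_eq_zero.1 hn] at hr
  | succ n ih =>
    rcases h.two_le_card.eq_or_lt' with hS2 | hS3
    · obtain ⟨rfl, hadj⟩ := h.eq_pair hS2 hs.1 hr hsr
      exact ⟨0, {r}, r, r, {s}, .root, .single ⟨by simpa using hsr, by simp, by simp, hadj, hadj,
        by simp⟩, by rw [Finset.union_comm, ← Finset.insert_eq]⟩
    obtain ⟨herase, a, b, hab, hsab⟩ := h.erase hS3 hs
    have hS : insert s (S.erase s) = S := Finset.insert_erase hs.1
    have hab_of_simplicial : ∀ v, IsSimplicialOn G (S.erase s) v → v ≠ r → v = a ∨ v = b := by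
      intro v hv hvr
      refine hsab.eq_or_eq v hv.1 (by_contra fun hsv => ?_)
      have hvS := hS ▸ hv.insert_of_not_adj fun hvs => hsv hvs.symm
      exact (huniq v hvS hvr).elim (Finset.ne_of_mem_erase hv.1) hsv
    have hrS : r ∈ S.erase s := Finset.mem_erase.2 ⟨hsr.symm, hr⟩
    have hcard : (S.erase s).card = n := by
      rw [Finset.card_erase_of_mem hs.1, hn, Nat.add_sub_cancel]
    have extend_of_simplicial : ∀ {a b}, G.Adj a b → Attached G (S.erase s) s a b →
        (∀ v, IsSimplicialOn G (S.erase s) v → v ≠ r → v = a ∨ v = b) →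
        IsSimplicialOn G (S.erase s) a → a ≠ r →
        ∃ i T z z' L, Layered G r i T z z' ∧ Fan G T z z' s L ∧ T ∪ L = S := by
      intro a b hab hsab hsimp ha har
      obtain ⟨i, T, z, z', L, hlayered, hf, hTL⟩ := ih herase hrS ha har
        (fun v hv hvr => (hsimp v hv hvr).imp_right (by rintro rfl; exact hab)) hcard
      rw [← hS, ← hTL]
      exact hlayered.exists_of_attached hf (hTL ▸ hsab) hab
    obtain ⟨v, hv, hvr⟩ := herase.exists_isSimplicialOn_ne hrS
    rcases hab_of_simplicial v hv hvr with rfl | rfl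
    · exact extend_of_simplicial hab hsab hab_of_simplicial hv hvr
    · exact extend_of_simplicial hab.symm hsab.symm (fun w hw hwr =>
        (hab_of_simplicial w hw hwr).symm) hv hvr

theorem IsTwoPath.exists_layered [Fintype V] (hG : IsTwoPath G) (hr : IsSimplicial G r) :
    ∃ i T z z' s L, Layered G r i T z z' ∧ Fan G T z z' s L ∧ T ∪ L = Finset.univ := by
  obtain ⟨htree, hcard⟩ := hG
  obtain ⟨s, hs, hsr⟩ := Set.exists_ne_of_one_lt_ncard (by rw [hcard]; exact one_lt_two) r
  have hpair : {r, s} = {v | IsSimplicial G v} := Set.eq_of_subset_of_ncard_le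
    (Set.pair_subset hr hs) (by rw [hcard, Set.ncard_pair hsr.symm]) (Set.toFinite _)
  have huniq : ∀ v, IsSimplicial G v → v ≠ r → v = s := fun v hv hvr =>
    (hpair.ge hv).resolve_left hvr
  obtain ⟨i, T, z, z', L, h⟩ := (htree.isTwoTreeOn .univ Finset.mem_univ).exists_layered
    (Finset.mem_univ r) (isSimplicialOn_univ_iff.2 hs) hsr
    fun v hv hvr => .inl (huniq v (isSimplicialOn_univ_iff.1 hv) hvr)
  exact ⟨i, T, z, z', s, L, h⟩

end TwoTree

/-- for a 2-path `G` on `n` vertices with simplicial vertex `r` of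
eccentricity `d`, every configuration of size at least `2^d + n − 2d` is
`r`-solvable, and consequently `π_t(G,r) = t·2^d + n − 2d` for all `t ≥ 1`. -/
theorem twoPath_simplicial_root_pebbling {V : Type} [Fintype V] (G : SimpleGraph V)
    (hG : IsTwoPath G) (r : V) (hr : IsSimplicial G r) (n d : ℕ)
    (hn : Fintype.card V = n) (hd : d = eccG G r) :
    (∀ C : V → ℕ, 2 ^ d + n - 2 * d ≤ ∑ᶠ v, C v → TSolvable G C r 1) ∧
    (∀ t : ℕ, 1 ≤ t → piT G r t = t * 2 ^ d + n - 2 * d) := by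
  classical
  obtain ⟨i, T, z, z', s, L, hlayered, hfan, hV⟩ := hG.exists_layered hr
  have hd' : d = i + 1 := hd.trans (hlayered.eccG_eq hfan hV)
  subst hn hd'
  refine ⟨fun C hC => hlayered.tSolvable_of_fan hfan hV le_rfl ?_,
    fun t ht => hlayered.piT_eq hfan hV ht⟩
  rw [finsum_eq_sum_of_fintype] at hC
  omega
end
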